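/- There exists a* ∈ [1, 1.032695) such that λ₁(a*) ≤ λ₁(a) for all a ≥ 1 (i.e. the first Dirichlet biharmonic eigenvalue attains a global minimum over rectangles of unit area), and every such minimiser a* satisfies (a*)² ≤ 1.066459, i.e. the quotient between the longest and shortest side lengths of a minimising rectangle does not exceed 1.066459. -/

import Mathlib

open MeasureTheory Real Filter

noncomputable section

/-- Directional (partial) derivative of `u : ℝ × ℝ → ℝ` in direction `v`. -/
def pd (v : ℝ × ℝ) (u : ℝ × ℝ → ℝ) : ℝ × ℝ → ℝ := fun p => fderiv ℝ u p v

/-- Second partial derivative `∂²u/∂x²`. -/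
def uxx (u : ℝ × ℝ → ℝ) : ℝ × ℝ → ℝ := pd (1, 0) (pd (1, 0) u)

/-- Second partial derivative `∂²u/∂y²`. -/
def uyy (u : ℝ × ℝ → ℝ) : ℝ × ℝ → ℝ := pd (0, 1) (pd (0, 1) u)

/-- Mixed second partial derivative `∂²u/∂x∂y`. -/
def uxy (u : ℝ × ℝ → ℝ) : ℝ × ℝ → ℝ := pd (0, 1) (pd (1, 0) u)

/-- The Laplacian `Δu = u_xx + u_yy`. -/
def lap (u : ℝ × ℝ → ℝ) : ℝ × ℝ → ℝ := fun p => uxx u p + uyy u p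

/-- The open rectangle `R_a = (0,a) × (0,1/a)` of unit area. -/
def Rect (a : ℝ) : Set (ℝ × ℝ) := Set.Ioo 0 a ×ˢ Set.Ioo 0 (1 / a)

/-- Admissible test functions: smooth, compactly supported inside `Ω`. -/
def Adm (Ω : Set (ℝ × ℝ)) (u : ℝ × ℝ → ℝ) : Prop :=
  ContDiff ℝ (⊤ : ℕ∞) u ∧ HasCompactSupport u ∧ tsupport u ⊆ Ω

/-- First Dirichlet eigenvalue of the biharmonic operator on `R_a`,
characterized variationally as the infimum of the Rayleigh quotient. -/
def lam1 (a : ℝ) : ℝ :=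
  sInf { μ | ∃ u : ℝ × ℝ → ℝ, Adm (Rect a) u ∧ u ≠ 0 ∧
    μ = (∫ p, (lap u p) ^ 2) / (∫ p, (u p) ^ 2) }

/-!
Rescaling `R_a` to the unit square turns `λ₁(a)` into the infimum over admissible `v` of the
quotient of `a⁻⁴ ∫ v_xx² + 2 ∫ v_xy² + a⁴ ∫ v_yy²` by `∫ v²`. Since this form depends continuously
on `a` relative to itself, `λ₁` is lower semicontinuous and attains its minimum on compact
intervals. It therefore suffices that `λ₁(1) < 1294.9346 ≤ λ₁(a)` for all `a ≥ 1.032695`.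

The upper bound is a Ritz bound with a sum of four tensor squares of polynomials. For the lower
bound, commutation of the two factors in `(-∂ₓ² - π²)(-∂ᵧ² - π²) ≥ 0` gives
`∫ v_xy² ≥ π² ∫ v_x² + π² ∫ v_y² - π⁴ ∫ v²`, which separates the variables: what remains are two
clamped beams under tension `2 π²`, whose ground state energies are bounded below by explicit
positive supersolutions.
-/

section AdmissibleFunctions

open scoped ContDiff

variable {Ω : Set (ℝ × ℝ)} {u v : ℝ × ℝ → ℝ}

theorem Adm.differentiable (hu : Adm Ω u) : Differentiable ℝ u := hu.1.differentiable (by simp)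

theorem Adm.continuous (hu : Adm Ω u) : Continuous u := hu.1.continuous

theorem Adm.eq_zero_of_notMem (hu : Adm Ω u) {p : ℝ × ℝ} (hp : p ∉ Ω) : u p = 0 :=
  image_eq_zero_of_notMem_tsupport fun h => hp (hu.2.2 h)

theorem Adm.adm_pd (hu : Adm Ω u) (w : ℝ × ℝ) : Adm Ω (pd w u) :=
  ⟨(hu.1.fderiv_right (m := ∞) (by simp)).clm_apply contDiff_const,
    hu.2.1.fderiv_apply ℝ w, (tsupport_fderiv_apply_subset ℝ w).trans hu.2.2⟩

theorem Adm.add (hu : Adm Ω u) (hv : Adm Ω v) : Adm Ω (fun p => u p + v p) :=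
  ⟨hu.1.add hv.1, hu.2.1.add hv.2.1, (tsupport_add u v).trans (Set.union_subset hu.2.2 hv.2.2)⟩

theorem Adm.mul_left (hu : Adm Ω u) {f : ℝ × ℝ → ℝ} (hf : ContDiff ℝ ∞ f) :
    Adm Ω (fun p => f p * u p) :=
  ⟨hf.mul hu.1, hu.2.1.mul_left, tsupport_mul_subset_right.trans hu.2.2⟩

theorem Adm.integrable (hu : Adm Ω u) : Integrable u :=
  hu.continuous.integrable_of_hasCompactSupport hu.2.1

theorem Adm.integrable_mul (hu : Adm Ω u) (hv : Adm Ω v) : Integrable fun p => u p * v p :=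
  (hv.mul_left hu.1).integrable

theorem Adm.integrable_sq (hu : Adm Ω u) : Integrable fun p => u p ^ 2 := by
  simpa only [pow_two] using hu.integrable_mul hu

theorem Adm.pd_comm (hu : Adm Ω u) (w w' : ℝ × ℝ) : pd w (pd w' u) = pd w' (pd w u) := by
  have pd_pd : ∀ w w' p, pd w (pd w' u) p = fderiv ℝ (fderiv ℝ u) p w w' := fun w w' p => by
    have h : DifferentiableAt ℝ (fderiv ℝ u) p :=
      (hu.1.fderiv_right (m := ∞) (by simp)).differentiable (by simp) p
    have h' := (h.hasFDerivAt.clm_apply (hasFDerivAt_const w' p)).fderiv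
    change fderiv ℝ (fun q => fderiv ℝ u q w') p w = _
    simp [h']
  funext p
  rw [pd_pd, pd_pd]
  exact hu.1.contDiffAt.isSymmSndFDerivAt
    (by simpa using WithTop.coe_le_coe.2 (le_top : (2 : ℕ∞) ≤ ⊤)) w w'

theorem Adm.integral_pd_mul (hu : Adm Ω u) (hv : Adm Ω v) (w : ℝ × ℝ) :
    ∫ p, pd w u p * v p = -∫ p, u p * pd w v p := by
  refine (neg_eq_iff_eq_neg.2 ?_).symm
  exact integral_mul_fderiv_eq_neg_fderiv_mul_of_integrable ((hu.adm_pd w).integrable_mul hv)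
    (hu.integrable_mul (hv.adm_pd w)) (hu.integrable_mul hv)
    (fun p _ => hu.differentiable p) (fun p _ => hv.differentiable p)

theorem Adm.integral_pd (hu : Adm Ω u) (w : ℝ × ℝ) : ∫ p, pd w u p = 0 := by
  have h := integral_mul_fderiv_eq_neg_fderiv_mul_of_integrable (μ := volume) (v := w)
    (f := fun _ => (1 : ℝ)) (g := u) (by simp)
    ((hu.adm_pd w).integrable.congr <| .of_forall fun p => (one_mul _).symm)
    (by simpa only [one_mul] using hu.integrable)
    (fun p _ => differentiableAt_const _) (fun p _ => hu.differentiable p)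
  simpa [pd] using h

theorem Adm.integral_sq_pos (hu : Adm Ω u) (h0 : u ≠ 0) : 0 < ∫ p, u p ^ 2 := by
  obtain ⟨p, hp⟩ := Function.ne_iff.1 h0
  exact (hu.continuous.pow 2).integral_pos_of_hasCompactSupport_nonneg_nonzero
    (by simpa only [pow_two] using hu.2.1.mul_left) (fun q => sq_nonneg _)
    (pow_ne_zero 2 hp)

theorem Adm.exists_ne_zero (hΩ : (interior Ω).Nonempty) : ∃ u, Adm Ω u ∧ u ≠ 0 := by
  obtain ⟨p, hp⟩ := hΩ
  obtain ⟨u, hsupp, hcompact, hsmooth, -, hp1⟩ :=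
    exists_contDiff_tsupport_subset (n := ⊤) (mem_interior_iff_mem_nhds.1 hp)
  refine ⟨u, ⟨hsmooth, hcompact, hsupp⟩, fun h => ?_⟩
  simp [h] at hp1

theorem Adm.adm_uxx (hu : Adm Ω u) : Adm Ω (uxx u) := (hu.adm_pd (1, 0)).adm_pd (1, 0)

theorem Adm.adm_uyy (hu : Adm Ω u) : Adm Ω (uyy u) := (hu.adm_pd (0, 1)).adm_pd (0, 1)

theorem Adm.adm_uxy (hu : Adm Ω u) : Adm Ω (uxy u) := (hu.adm_pd (1, 0)).adm_pd (0, 1)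

/-- The quadratic form `t⁻¹ ∫ u_xx² + 2 ∫ u_xy² + t ∫ u_yy²`. The form `∫ (Δu)²` on the rectangle
with sides `a` and `1 / a` becomes `energy (a ^ 4)` after rescaling to the unit square. -/
def energy (t : ℝ) (u : ℝ × ℝ → ℝ) : ℝ :=
  t⁻¹ * (∫ p, uxx u p ^ 2) + 2 * (∫ p, uxy u p ^ 2) + t * (∫ p, uyy u p ^ 2)

theorem Adm.integral_uxx_mul_uyy (hu : Adm Ω u) : ∫ p, uxx u p * uyy u p = ∫ p, uxy u p ^ 2 := by
  have hx := hu.adm_pd (1, 0)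
  calc ∫ p, uxx u p * uyy u p
      = -∫ p, pd (1, 0) u p * pd (0, 1) (uxy u) p := by
        rw [uxx, hx.integral_pd_mul hu.adm_uyy, uyy, (hu.adm_pd (0, 1)).pd_comm, hu.pd_comm, uxy]
    _ = ∫ p, uxy u p * uxy u p := by rw [← hx.integral_pd_mul hu.adm_uxy, uxy]
    _ = ∫ p, uxy u p ^ 2 := by simp only [pow_two]

theorem Adm.integral_lap_sq (hu : Adm Ω u) : ∫ p, lap u p ^ 2 = energy 1 u := by
  have hxx := hu.adm_uxx
  have hyy := hu.adm_uyy
  have hcross : Integrable fun p => 2 * uxx u p * uyy u p := by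
    simpa only [mul_assoc] using (hxx.integrable_mul hyy).const_mul 2
  have hsum : Integrable fun p => uxx u p ^ 2 + 2 * uxx u p * uyy u p :=
    hxx.integrable_sq.add hcross
  simp only [lap, add_sq]
  rw [integral_add hsum hyy.integrable_sq, integral_add hxx.integrable_sq hcross]
  simp only [mul_assoc, integral_const_mul, hu.integral_uxx_mul_uyy, energy]
  ring

end AdmissibleFunctions

section Rescaling

variable {Ω : Set (ℝ × ℝ)} {u : ℝ × ℝ → ℝ}

theorem Adm.comp_continuousLinearEquiv (hu : Adm Ω u) (L : (ℝ × ℝ) ≃L[ℝ] ℝ × ℝ) :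
    Adm (L ⁻¹' Ω) (u ∘ L) := by
  refine ⟨hu.1.comp L.contDiff, hu.2.1.comp_homeomorph L.toHomeomorph, ?_⟩
  exact (tsupport_comp_eq_preimage u L.toHomeomorph).trans_subset (Set.preimage_mono hu.2.2)

theorem pd_comp_continuousLinearEquiv (u : ℝ × ℝ → ℝ) (L : (ℝ × ℝ) ≃L[ℝ] ℝ × ℝ) (w : ℝ × ℝ) :
    pd w (u ∘ L) = pd (L w) u ∘ L := by
  funext p
  simp only [pd, L.comp_right_fderiv, Function.comp_apply, ContinuousLinearMap.comp_apply,
    ContinuousLinearEquiv.coe_coe]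

theorem pd_smul (c : ℝ) (w : ℝ × ℝ) (u : ℝ × ℝ → ℝ) : pd (c • w) u = c • pd w u := by
  funext p
  simp only [pd, map_smul, Pi.smul_apply]

theorem pd_const_smul (c : ℝ) (w : ℝ × ℝ) (u : ℝ × ℝ → ℝ) : pd w (c • u) = c • pd w u := by
  funext p
  simp only [pd, fderiv_const_smul_field, Pi.smul_apply, smul_apply]

theorem integral_comp_continuousLinearEquiv (L : (ℝ × ℝ) ≃L[ℝ] ℝ × ℝ)
    (hL : |LinearMap.det (L : ℝ × ℝ →ₗ[ℝ] ℝ × ℝ)| = 1) (f : ℝ × ℝ → ℝ) :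
    ∫ p, f (L p) = ∫ p, f p := by
  have hdet : LinearMap.det (L : ℝ × ℝ →ₗ[ℝ] ℝ × ℝ) ≠ 0 := fun h => by simp [h] at hL
  have hmap := Measure.map_linearMap_addHaar_eq_smul_addHaar volume hdet
  rw [abs_inv, hL, inv_one, ENNReal.ofReal_one, one_smul] at hmap
  exact MeasurePreserving.integral_comp ⟨L.continuous.measurable, hmap⟩
    L.toHomeomorph.measurableEmbedding f

/-- The area-preserving dilation `(x, y) ↦ (s x, y / s)`. -/
def squeeze (s : ℝ) (hs : s ≠ 0) : (ℝ × ℝ) ≃L[ℝ] ℝ × ℝ :=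
  (ContinuousLinearEquiv.unitsEquivAut ℝ (Units.mk0 s hs)).prodCongr
    (ContinuousLinearEquiv.unitsEquivAut ℝ (Units.mk0 s hs)⁻¹)

theorem squeeze_apply (s : ℝ) (hs : s ≠ 0) (p : ℝ × ℝ) :
    squeeze s hs p = (p.1 * s, p.2 * s⁻¹) := by
  simp [squeeze]

theorem det_squeeze (s : ℝ) (hs : s ≠ 0) :
    LinearMap.det (squeeze s hs : ℝ × ℝ →ₗ[ℝ] ℝ × ℝ) = 1 := by
  have : (squeeze s hs : ℝ × ℝ →ₗ[ℝ] ℝ × ℝ)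
      = (LinearMap.toSpanSingleton ℝ ℝ s).prodMap (LinearMap.toSpanSingleton ℝ ℝ s⁻¹) := by
    ext <;> simp [squeeze_apply]
  rw [this, LinearMap.det_prodMap, LinearMap.det_ring, LinearMap.det_ring]
  simp [hs]

theorem integral_sq_comp_squeeze {s : ℝ} (hs : s ≠ 0) (u : ℝ × ℝ → ℝ) :
    ∫ p, (u ∘ squeeze s hs) p ^ 2 = ∫ p, u p ^ 2 :=
  integral_comp_continuousLinearEquiv _ (by rw [det_squeeze, abs_one]) fun p => u p ^ 2

theorem pd_fst_comp_squeeze {s : ℝ} (hs : s ≠ 0) (u : ℝ × ℝ → ℝ) :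
    pd (1, 0) (u ∘ squeeze s hs) = s • pd (1, 0) u ∘ squeeze s hs := by
  have : squeeze s hs (1, 0) = s • (1, 0) := by simp [squeeze_apply]
  rw [pd_comp_continuousLinearEquiv, this, pd_smul]
  rfl

theorem pd_snd_comp_squeeze {s : ℝ} (hs : s ≠ 0) (u : ℝ × ℝ → ℝ) :
    pd (0, 1) (u ∘ squeeze s hs) = s⁻¹ • pd (0, 1) u ∘ squeeze s hs := by
  have : squeeze s hs (0, 1) = s⁻¹ • (0, 1) := by simp [squeeze_apply]
  rw [pd_comp_continuousLinearEquiv, this, pd_smul]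
  rfl

theorem energy_comp_squeeze {s : ℝ} (hs : s ≠ 0) (t : ℝ) (u : ℝ × ℝ → ℝ) :
    energy t (u ∘ squeeze s hs) = energy (t / s ^ 4) u := by
  simp only [energy, uxx, uxy, uyy, pd_fst_comp_squeeze, pd_snd_comp_squeeze, pd_const_smul,
    Pi.smul_apply, smul_eq_mul, mul_pow, integral_const_mul, integral_sq_comp_squeeze]
  field_simp

theorem squeeze_preimage_Rect {s : ℝ} (hs : 0 < s) (b : ℝ) :
    squeeze s hs.ne' ⁻¹' Rect b = Rect (b / s) := by
  ext p
  simp only [Rect, Set.mem_preimage, squeeze_apply, Set.mem_prod, Set.mem_Ioo, one_div_div,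
    lt_div_iff₀ hs, ← div_eq_mul_inv, div_lt_iff₀ hs, zero_mul,
    mul_pos_iff_of_pos_right hs, one_div_mul_eq_div]

theorem Adm.comp_squeeze {b s : ℝ} (hs : 0 < s) (hu : Adm (Rect b) u) :
    Adm (Rect (b / s)) (u ∘ squeeze s hs.ne') :=
  squeeze_preimage_Rect hs b ▸ hu.comp_continuousLinearEquiv _

end Rescaling

section FirstEigenvalue

theorem nonempty_interior_Rect {a : ℝ} (ha : 0 < a) : (interior (Rect a)).Nonempty := by
  rw [Rect, (isOpen_Ioo.prod isOpen_Ioo).interior_eq]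
  exact (Set.nonempty_Ioo.2 ha).prod (Set.nonempty_Ioo.2 (by positivity))

theorem le_lam1_iff_integral_lap_sq {a c : ℝ} (ha : 0 < a) :
    c ≤ lam1 a ↔ ∀ u, Adm (Rect a) u → c * ∫ p, u p ^ 2 ≤ ∫ p, lap u p ^ 2 := by
  obtain ⟨u₀, hu₀, hu₀0⟩ := Adm.exists_ne_zero (nonempty_interior_Rect ha)
  rw [lam1, le_csInf_iff]
  · refine ⟨fun h u hu => ?_, ?_⟩
    · rcases eq_or_ne u 0 with rfl | hu0
      · simpa using integral_nonneg fun p => sq_nonneg (lap 0 p)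
      · exact (le_div_iff₀ (hu.integral_sq_pos hu0)).1 (h _ ⟨u, hu, hu0, rfl⟩)
    · rintro h _ ⟨u, hu, hu0, rfl⟩
      exact (le_div_iff₀ (hu.integral_sq_pos hu0)).2 (h u hu)
  · refine ⟨0, ?_⟩
    rintro _ ⟨u, -, -, rfl⟩
    exact div_nonneg (integral_nonneg fun _ => sq_nonneg _) (integral_nonneg fun _ => sq_nonneg _)
  · exact ⟨_, u₀, hu₀, hu₀0, rfl⟩

theorem le_lam1_iff {a c : ℝ} (ha : 0 < a) :
    c ≤ lam1 a ↔ ∀ v, Adm (Rect 1) v → c * ∫ p, v p ^ 2 ≤ energy (a ^ 4) v := by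
  rw [le_lam1_iff_integral_lap_sq ha]
  refine ⟨fun h v hv => ?_, fun h u hu => ?_⟩
  · have hu : Adm (Rect a) (v ∘ squeeze a⁻¹ (inv_ne_zero ha.ne')) := by
      simpa only [div_inv_eq_mul, one_mul] using hv.comp_squeeze (inv_pos.2 ha)
    have := h _ hu
    rwa [hu.integral_lap_sq, energy_comp_squeeze, inv_pow, one_div, inv_inv,
      integral_sq_comp_squeeze] at this
  · have hv : Adm (Rect 1) (u ∘ squeeze a ha.ne') := by
      simpa only [div_self ha.ne'] using hu.comp_squeeze ha
    have := h _ hv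
    rwa [energy_comp_squeeze, div_self (pow_ne_zero 4 ha.ne'), ← hu.integral_lap_sq,
      integral_sq_comp_squeeze] at this

end FirstEigenvalue

section GroundStateSubstitution

open scoped ContDiff

variable {Ω : Set (ℝ × ℝ)} {u v z : ℝ × ℝ → ℝ} {φ : ℝ → ℝ}

theorem hasDerivAt_slice_fst (hu : Differentiable ℝ u) (p : ℝ × ℝ) :
    HasDerivAt (fun x => u (x, p.2)) (pd (1, 0) u p) p.1 :=
  HasFDerivAt.comp_hasDerivAt p.1 (hu p).hasFDerivAt
    ((hasDerivAt_id p.1).prodMk (hasDerivAt_const p.1 p.2))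

theorem hasDerivAt_slice_snd (hu : Differentiable ℝ u) (p : ℝ × ℝ) :
    HasDerivAt (fun y => u (p.1, y)) (pd (0, 1) u p) p.2 :=
  HasFDerivAt.comp_hasDerivAt p.2 (hu p).hasFDerivAt
    ((hasDerivAt_const p.2 p.1).prodMk (hasDerivAt_id p.2))

theorem pd_fst_mul (hφ : Differentiable ℝ φ) (hz : Differentiable ℝ z) :
    pd (1, 0) (fun p => φ p.1 * z p)
      = fun p => deriv φ p.1 * z p + φ p.1 * pd (1, 0) z p := by
  funext p
  exact (hasDerivAt_slice_fst (by fun_prop) p).unique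
    ((hφ p.1).hasDerivAt.mul (hasDerivAt_slice_fst hz p))

theorem pd_snd_mul (hφ : Differentiable ℝ φ) (hz : Differentiable ℝ z) :
    pd (0, 1) (fun p => φ p.1 * z p) = fun p => φ p.1 * pd (0, 1) z p := by
  funext p
  exact (hasDerivAt_slice_snd (by fun_prop) p).unique
    ((hasDerivAt_slice_snd hz p).const_mul (φ p.1))

theorem hasDerivAt_iterate_deriv (hφ : ContDiff ℝ ∞ φ) (k : ℕ) (x : ℝ) :
    HasDerivAt (deriv^[k] φ) (deriv^[k + 1] φ x) x := by
  rw [Function.iterate_succ_apply']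
  exact ((hφ.iterate_deriv k).differentiable (by simp) x).hasDerivAt

theorem Adm.exists_eq_mul (hv : Adm Ω v) {g : ℝ × ℝ → ℝ} (hg : ContDiff ℝ ∞ g)
    (hg0 : ∀ p ∈ Ω, g p ≠ 0) : ∃ z, Adm Ω z ∧ v = fun p => g p * z p := by
  have hsupp : tsupport (fun p => v p / g p) ⊆ tsupport v := by
    simpa only [div_eq_mul_inv] using tsupport_mul_subset_left
  refine ⟨fun p => v p / g p, ⟨contDiff_iff_contDiffAt.2 fun p => ?_,
    hv.2.1.mono' (subset_closure.trans hsupp), hsupp.trans hv.2.2⟩, funext fun p => ?_⟩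
  · by_cases hp : p ∈ tsupport v
    · exact hv.1.contDiffAt.div hg.contDiffAt (hg0 p (hv.2.2 hp))
    · exact contDiffAt_const.congr_of_eventuallyEq
        (notMem_tsupport_iff_eventuallyEq.1 fun h => hp (hsupp h))
  · by_cases hp : p ∈ Ω
    · exact (mul_div_cancel₀ _ (hg0 p hp)).symm
    · simp [hv.eq_zero_of_notMem hp]

theorem Adm.integral_nonneg_of_pd_le (hu : Adm Ω u) {f : ℝ × ℝ → ℝ} (hf : Integrable f)
    {w : ℝ × ℝ} (h : ∀ p, pd w u p ≤ f p) : 0 ≤ ∫ p, f p :=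
  (hu.integral_pd w).symm.trans_le (integral_mono (hu.adm_pd w).integrable hf h)

theorem Adm.integrable_sq_combination {f g h : ℝ × ℝ → ℝ} (hf : Adm Ω f) (hg : Adm Ω g)
    (hh : Adm Ω h) (a b c : ℝ) : Integrable fun p => a * f p ^ 2 + b * g p ^ 2 - c * h p ^ 2 :=
  ((hf.integrable_sq.const_mul a).add (hg.integrable_sq.const_mul b)).sub
    (hh.integrable_sq.const_mul c)

theorem Adm.integral_sq_combination {f g h : ℝ × ℝ → ℝ} (hf : Adm Ω f) (hg : Adm Ω g)
    (hh : Adm Ω h) (a b c : ℝ) : ∫ p, (a * f p ^ 2 + b * g p ^ 2 - c * h p ^ 2)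
      = a * (∫ p, f p ^ 2) + b * (∫ p, g p ^ 2) - c * ∫ p, h p ^ 2 := by
  have hab : Integrable fun p => a * f p ^ 2 + b * g p ^ 2 :=
    (hf.integrable_sq.const_mul a).add (hg.integrable_sq.const_mul b)
  rw [integral_sub hab (hh.integrable_sq.const_mul c),
    integral_add (hf.integrable_sq.const_mul a) (hg.integrable_sq.const_mul b)]
  simp only [integral_const_mul]

theorem Adm.integral_sq_pd_mul (hz : Adm Ω z) (hφ : ContDiff ℝ ∞ φ) {μ : ℝ}
    (hμ : ∀ x, deriv^[2] φ x = -μ * φ x) :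
    ∫ p, pd (1, 0) (fun p => φ p.1 * z p) p ^ 2
      = (∫ p, (φ p.1 * pd (1, 0) z p) ^ 2) + μ * ∫ p, (φ p.1 * z p) ^ 2 := by
  have : ContDiff ℝ ∞ (deriv φ) := hφ.iterate_deriv 1
  have hzs := hz.1
  have hv : Adm Ω fun p => φ p.1 * z p := hz.mul_left (by fun_prop)
  have hzx : Adm Ω fun p => φ p.1 * pd (1, 0) z p := (hz.adm_pd _).mul_left (by fun_prop)
  have hV : Adm Ω fun p => φ p.1 * deriv φ p.1 * z p * z p := hz.mul_left (by fun_prop)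
  have hVx : ∀ p, pd (1, 0) (fun p => φ p.1 * deriv φ p.1 * z p * z p) p
      = 1 * pd (1, 0) (fun p => φ p.1 * z p) p ^ 2 + (-1) * (φ p.1 * pd (1, 0) z p) ^ 2
        - μ * (φ p.1 * z p) ^ 2 := fun p => by
    have hz' := hasDerivAt_slice_fst hz.differentiable p
    have h := (((hasDerivAt_iterate_deriv hφ 0 p.1).mul (hasDerivAt_iterate_deriv hφ 1 p.1)).mul
      hz').mul hz'
    refine ((hasDerivAt_slice_fst hV.differentiable p).unique h).trans ?_
    rw [hμ, pd_fst_mul (hφ.differentiable (by simp)) hz.differentiable]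
    simp only [Pi.mul_apply, Function.iterate_succ_apply, Function.iterate_zero_apply]
    ring
  have h := hV.integral_pd (1, 0)
  rw [integral_congr_ae (.of_forall hVx), (hv.adm_pd (1, 0)).integral_sq_combination hzx hv] at h
  linarith

theorem deriv_iterate_two_sin_mul (q x : ℝ) :
    deriv^[2] (fun x => sin (q * x)) x = -q ^ 2 * sin (q * x) := by
  have h : deriv (fun x => sin (q * x)) = fun x => q * cos (q * x) := funext fun x => by
    simpa [mul_comm] using ((hasDerivAt_id x).const_mul q).sin.deriv
  change deriv (deriv fun x => sin (q * x)) x = _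
  rw [h]
  refine ((((hasDerivAt_id x).const_mul q).cos).const_mul q).deriv.trans ?_
  simp only [id]
  ring

theorem sin_pi_mul_pos {x : ℝ} (hx : x ∈ Set.Ioo (0 : ℝ) 1) : 0 < sin (π * x) :=
  sin_pos_of_pos_of_lt_pi (mul_pos pi_pos hx.1) (mul_lt_of_lt_one_right pi_pos hx.2)

theorem Adm.exists_eq_sin_mul (hv : Adm Ω v) (hΩ : ∀ p ∈ Ω, p.1 ∈ Set.Ioo (0 : ℝ) 1) :
    ∃ z, Adm Ω z ∧ v = fun p => sin (π * p.1) * z p :=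
  hv.exists_eq_mul (by fun_prop) fun p hp => (sin_pi_mul_pos (hΩ p hp)).ne'

theorem Adm.integral_sq_pd_sin_mul (hz : Adm Ω z) :
    ∫ p, pd (1, 0) (fun p => sin (π * p.1) * z p) p ^ 2
      = (∫ p, (sin (π * p.1) * pd (1, 0) z p) ^ 2)
        + π ^ 2 * ∫ p, (sin (π * p.1) * z p) ^ 2 :=
  hz.integral_sq_pd_mul (φ := fun x => sin (π * x)) (by fun_prop) (deriv_iterate_two_sin_mul π)

theorem Adm.wirtinger_fst (hv : Adm Ω v) (hΩ : ∀ p ∈ Ω, p.1 ∈ Set.Ioo (0 : ℝ) 1) :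
    π ^ 2 * (∫ p, v p ^ 2) ≤ ∫ p, pd (1, 0) v p ^ 2 := by
  obtain ⟨z, hz, rfl⟩ := hv.exists_eq_sin_mul hΩ
  rw [hz.integral_sq_pd_sin_mul]
  exact le_add_of_nonneg_left (integral_nonneg fun p => sq_nonneg _)

theorem Adm.comp_swap (hu : Adm Ω u) : Adm (Prod.swap ⁻¹' Ω) (u ∘ Prod.swap) :=
  hu.comp_continuousLinearEquiv (ContinuousLinearEquiv.prodComm ℝ ℝ ℝ)

theorem pd_fst_comp_swap (u : ℝ × ℝ → ℝ) :
    pd (1, 0) (u ∘ Prod.swap) = pd (0, 1) u ∘ Prod.swap :=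
  pd_comp_continuousLinearEquiv u (ContinuousLinearEquiv.prodComm ℝ ℝ ℝ) (1, 0)

theorem integral_sq_comp_swap (u : ℝ × ℝ → ℝ) :
    ∫ p, (u ∘ Prod.swap) p ^ 2 = ∫ p, u p ^ 2 :=
  integral_prod_swap fun p => u p ^ 2

theorem Adm.wirtinger_snd (hv : Adm Ω v) (hΩ : ∀ p ∈ Ω, p.2 ∈ Set.Ioo (0 : ℝ) 1) :
    π ^ 2 * (∫ p, v p ^ 2) ≤ ∫ p, pd (0, 1) v p ^ 2 := by
  have h := hv.comp_swap.wirtinger_fst fun p hp => hΩ p.swap hp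
  rwa [pd_fst_comp_swap, integral_sq_comp_swap, integral_sq_comp_swap] at h

/- The form version of `(-∂ₓ² - π²)(-∂ᵧ² - π²) ≥ 0`: after substituting `v = sin (π x) z`, it is
Wirtinger's inequality in `y` for `sin (π x) z_x`. -/
theorem Adm.mixed_lower_bound (hv : Adm Ω v) (hΩ₁ : ∀ p ∈ Ω, p.1 ∈ Set.Ioo (0 : ℝ) 1)
    (hΩ₂ : ∀ p ∈ Ω, p.2 ∈ Set.Ioo (0 : ℝ) 1) :
    π ^ 2 * (∫ p, pd (1, 0) v p ^ 2) + π ^ 2 * (∫ p, pd (0, 1) v p ^ 2)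
      - π ^ 4 * (∫ p, v p ^ 2) ≤ ∫ p, uxy v p ^ 2 := by
  have hxy : uxy v = pd (1, 0) (pd (0, 1) v) := hv.pd_comm _ _
  obtain ⟨z, hz, rfl⟩ := hv.exists_eq_sin_mul hΩ₁
  have hsin : Differentiable ℝ fun x => sin (π * x) := by fun_prop
  have hzx := hz.adm_pd (1, 0)
  have hw : Adm Ω fun p => sin (π * p.1) * pd (1, 0) z p := hzx.mul_left (by fun_prop)
  have hx := hz.integral_sq_pd_sin_mul
  have hyx := (hz.adm_pd (0, 1)).integral_sq_pd_sin_mul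
  have hwirtinger := hw.wirtinger_snd hΩ₂
  rw [pd_snd_mul hsin hzx.differentiable, hz.pd_comm] at hwirtinger
  rw [hxy, pd_snd_mul hsin hz.differentiable]
  linear_combination π ^ 2 * hx - hyx + hwirtinger

end GroundStateSubstitution

section Supersolutions

open scoped ContDiff

variable {Ω : Set (ℝ × ℝ)} {v z : ℝ × ℝ → ℝ} {φ : ℝ → ℝ}

theorem Adm.uxx_mul (hz : Adm Ω z) (hφ : ContDiff ℝ ∞ φ) :
    uxx (fun p => φ p.1 * z p) = fun p =>
      deriv^[2] φ p.1 * z p + 2 * (deriv φ p.1 * pd (1, 0) z p) + φ p.1 * uxx z p := by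
  have hzx := hz.adm_pd (1, 0)
  have hsum : Differentiable ℝ fun p : ℝ × ℝ => deriv φ p.1 * z p + φ p.1 * pd (1, 0) z p :=
    ((hz.mul_left (f := fun p => deriv φ p.1) (by fun_prop)).add
      (hzx.mul_left (f := fun p => φ p.1) (by fun_prop))).differentiable
  funext p
  rw [uxx, pd_fst_mul (hφ.differentiable (by simp)) hz.differentiable]
  have hφ₀ := hasDerivAt_iterate_deriv hφ 0 p.1
  have hφ₁ := hasDerivAt_iterate_deriv hφ 1 p.1
  refine ((hasDerivAt_slice_fst hsum p).unique <|
    (hφ₁.mul (hasDerivAt_slice_fst hz.differentiable p)).add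
      (hφ₀.mul (hasDerivAt_slice_fst hzx.differentiable p))).trans ?_
  simp only [Function.iterate_succ_apply, Function.iterate_zero_apply, uxx]
  ring

/-- The field whose `x`-derivative turns `c v_xx² + τ v_x²`, for `v = φ z`, into the sum of squares
in `pd_supersolutionFlux`. -/
def supersolutionFlux (c τ : ℝ) (φ : ℝ → ℝ) (z : ℝ × ℝ → ℝ) : ℝ × ℝ → ℝ := fun p =>
  2 * c * φ p.1 * (deriv φ p.1 * pd (1, 0) z p + deriv^[2] φ p.1 * z p) * pd (1, 0) z p
    + (c * (deriv φ p.1 * deriv^[2] φ p.1 - φ p.1 * deriv^[3] φ p.1)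
      + τ * φ p.1 * deriv φ p.1) * z p * z p

theorem Adm.adm_supersolutionFlux (hz : Adm Ω z) (hφ : ContDiff ℝ ∞ φ) (c τ : ℝ) :
    Adm Ω (supersolutionFlux c τ φ z) := by
  have hzs := hz.1
  have hzxs := (hz.adm_pd (1, 0)).1
  have : ContDiff ℝ ∞ (deriv φ) := hφ.iterate_deriv 1
  have := hφ.iterate_deriv 2
  have := hφ.iterate_deriv 3
  exact ((hz.adm_pd (1, 0)).mul_left (by fun_prop)).add (hz.mul_left (by fun_prop))

theorem Adm.pd_supersolutionFlux (hz : Adm Ω z) (hφ : ContDiff ℝ ∞ φ) (c τ : ℝ) (p : ℝ × ℝ) :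
    pd (1, 0) (supersolutionFlux c τ φ z) p
      = c * uxx (fun p => φ p.1 * z p) p ^ 2 + τ * pd (1, 0) (fun p => φ p.1 * z p) p ^ 2
        - c * φ p.1 ^ 2 * uxx z p ^ 2
        - (c * (2 * deriv φ p.1 ^ 2 - 4 * φ p.1 * deriv^[2] φ p.1) + τ * φ p.1 ^ 2)
          * pd (1, 0) z p ^ 2
        - (c * deriv^[4] φ p.1 - τ * deriv^[2] φ p.1) * φ p.1 * z p ^ 2 := by
  have hzx := hz.adm_pd (1, 0)
  have h₀ := hasDerivAt_slice_fst hz.differentiable p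
  have h₁ := hasDerivAt_slice_fst hzx.differentiable p
  have hφ' := fun k => hasDerivAt_iterate_deriv hφ k p.1
  have hflux := ((((hφ' 0).const_mul (2 * c)).mul (((hφ' 1).mul h₁).add ((hφ' 2).mul h₀))).mul
    h₁).add (((((((hφ' 1).mul (hφ' 2)).sub ((hφ' 0).mul (hφ' 3))).const_mul c).add
      (((hφ' 0).const_mul τ).mul (hφ' 1))).mul h₀).mul h₀)
  refine ((hasDerivAt_slice_fst (hz.adm_supersolutionFlux hφ c τ).differentiable p).unique
    hflux).trans ?_
  rw [hz.uxx_mul hφ, pd_fst_mul (hφ.differentiable (by simp)) hz.differentiable]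
  simp only [Pi.mul_apply, Pi.add_apply, Pi.sub_apply, Function.iterate_succ_apply,
    Function.iterate_zero_apply, uxx]
  ring

theorem Adm.le_of_supersolution (hv : Adm Ω v) (hφ : ContDiff ℝ ∞ φ) {c τ l : ℝ} (hc : 0 ≤ c)
    (hpos : ∀ p ∈ Ω, 0 < φ p.1)
    (hsup : ∀ p ∈ Ω, l * φ p.1 ≤ c * deriv^[4] φ p.1 - τ * deriv^[2] φ p.1)
    (hgrad : ∀ p ∈ Ω,
      0 ≤ c * (2 * deriv φ p.1 ^ 2 - 4 * φ p.1 * deriv^[2] φ p.1) + τ * φ p.1 ^ 2) :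
    l * (∫ p, v p ^ 2) ≤ c * (∫ p, uxx v p ^ 2) + τ * ∫ p, pd (1, 0) v p ^ 2 := by
  obtain ⟨z, hz, rfl⟩ := hv.exists_eq_mul (g := fun p => φ p.1) (by fun_prop)
    fun p hp => (hpos p hp).ne'
  rw [← sub_nonneg, ← hv.adm_uxx.integral_sq_combination (hv.adm_pd (1, 0)) hv]
  refine (hz.adm_supersolutionFlux hφ c τ).integral_nonneg_of_pd_le
    (hv.adm_uxx.integrable_sq_combination (hv.adm_pd (1, 0)) hv c τ l) (w := (1, 0)) fun p => ?_
  rw [hz.pd_supersolutionFlux hφ]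
  have hzz : 0 ≤ c * φ p.1 ^ 2 * uxx z p ^ 2 := by positivity
  by_cases hp : p ∈ Ω
  · have hz₁ := mul_nonneg (hgrad p hp) (sq_nonneg (pd (1, 0) z p))
    have hz₀ := mul_nonneg (mul_nonneg (sub_nonneg.2 (hsup p hp)) (hpos p hp).le)
      (sq_nonneg (z p))
    linarith
  · simp only [hz.eq_zero_of_notMem hp, (hz.adm_pd (1, 0)).eq_zero_of_notMem hp]
    linarith

end Supersolutions

section ClampedBeam

open scoped ContDiff

/-- Combination of trigonometric and hyperbolic functions, symmetric about the midpoint of the unit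
interval; up to scaling, the ground state of a clamped beam under tension has this shape. -/
def evenMode (q p A B x : ℝ) : ℝ := A * cos (q * (x - 1 / 2)) + B * cosh (p * (x - 1 / 2))

/-- Antisymmetric counterpart of `evenMode`; derivatives exchange the two. -/
def oddMode (q p A B x : ℝ) : ℝ := A * sin (q * (x - 1 / 2)) + B * sinh (p * (x - 1 / 2))

variable {q p A B c τ x : ℝ}

theorem contDiff_evenMode (q p A B : ℝ) : ContDiff ℝ ∞ (evenMode q p A B) := by
  unfold evenMode
  fun_prop

theorem contDiff_oddMode (q p A B : ℝ) : ContDiff ℝ ∞ (oddMode q p A B) := by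
  unfold oddMode
  fun_prop

theorem hasDerivAt_const_mul_sub_const (k a x : ℝ) : HasDerivAt (fun x => k * (x - a)) k x :=
  (((hasDerivAt_id x).sub_const a).const_mul k).congr_deriv (mul_one k)

theorem hasDerivAt_evenMode (q p A B x : ℝ) :
    HasDerivAt (evenMode q p A B) (oddMode q p (-(q * A)) (p * B) x) x := by
  have h := fun k => hasDerivAt_const_mul_sub_const k (1 / 2) x
  exact (((h q).cos.const_mul A).add ((h p).cosh.const_mul B)).congr_deriv (by rw [oddMode]; ring)

theorem hasDerivAt_oddMode (q p A B x : ℝ) :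
    HasDerivAt (oddMode q p A B) (evenMode q p (q * A) (p * B) x) x := by
  have h := fun k => hasDerivAt_const_mul_sub_const k (1 / 2) x
  exact (((h q).sin.const_mul A).add ((h p).sinh.const_mul B)).congr_deriv (by rw [evenMode]; ring)

theorem deriv_evenMode (q p A B : ℝ) :
    deriv (evenMode q p A B) = oddMode q p (-(q * A)) (p * B) :=
  funext fun x => (hasDerivAt_evenMode q p A B x).deriv

theorem deriv_oddMode (q p A B : ℝ) : deriv (oddMode q p A B) = evenMode q p (q * A) (p * B) :=
  funext fun x => (hasDerivAt_oddMode q p A B x).deriv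

theorem evenMode_one_sub (q p A B x : ℝ) : evenMode q p A B (1 - x) = evenMode q p A B x := by
  have h : 1 - x - 1 / 2 = -(x - 1 / 2) := by ring
  simp only [evenMode, h, mul_neg, cos_neg, cosh_neg]

theorem oddMode_one_sub (q p A B x : ℝ) : oddMode q p A B (1 - x) = -oddMode q p A B x := by
  have h : 1 - x - 1 / 2 = -(x - 1 / 2) := by ring
  simp only [oddMode, h, mul_neg, sin_neg, sinh_neg]
  ring

theorem oddMode_half (q p A B : ℝ) : oddMode q p A B (1 / 2) = 0 := by simp [oddMode]

theorem oddMode_pos (hq : 0 < q) (hq' : q ≤ 2 * π) (hp : 0 < p) (hA : 0 < A) (hB : 0 ≤ B)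
    (hx : x ∈ Set.Ioo (1 / 2 : ℝ) 1) : 0 < oddMode q p A B x := by
  have hx₀ : 0 < x - 1 / 2 := by linarith [hx.1]
  have hsin : 0 < sin (q * (x - 1 / 2)) :=
    sin_pos_of_pos_of_lt_pi (by positivity) (by nlinarith [hx.2])
  have hsinh : 0 < sinh (p * (x - 1 / 2)) := sinh_pos_iff.2 (by positivity)
  exact add_pos_of_pos_of_nonneg (mul_pos hA hsin) (mul_nonneg hB hsinh.le)

theorem strictConvexOn_oddMode (hq : 0 < q) (hq' : q ≤ 2 * π) (hp : 0 < p) (hA : A < 0)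
    (hB : 0 ≤ B) : StrictConvexOn ℝ (Set.Icc (1 / 2) 1) (oddMode q p A B) := by
  refine strictConvexOn_of_deriv2_pos (convex_Icc _ _)
    (contDiff_oddMode q p A B).continuous.continuousOn fun x hx => ?_
  rw [interior_Icc] at hx
  rw [Function.iterate_succ_apply, Function.iterate_one, deriv_oddMode, deriv_evenMode]
  exact oddMode_pos hq hq' hp (by nlinarith [mul_neg_of_pos_of_neg hq hA]) (by positivity) hx

theorem oddMode_neg (hq : 0 < q) (hq' : q ≤ 2 * π) (hp : 0 < p) (hA : A < 0) (hB : 0 ≤ B)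
    (hend : oddMode q p A B 1 ≤ 0) (hx : x ∈ Set.Ioo (1 / 2 : ℝ) 1) : oddMode q p A B x < 0 := by
  have hweights : (2 - 2 * x) • (1 / 2 : ℝ) + (2 * x - 1) • (1 : ℝ) = x := by
    simp only [smul_eq_mul]
    ring
  have h := (strictConvexOn_oddMode hq hq' hp hA hB).2 (x := 1 / 2) (y := 1) (by norm_num)
    (by norm_num) (by norm_num) (by linarith [hx.2] : 0 < 2 - 2 * x)
    (by linarith [hx.1] : 0 < 2 * x - 1) (by ring)
  rw [hweights, oddMode_half, smul_zero, zero_add, smul_eq_mul] at h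
  exact h.trans_le (mul_nonpos_of_nonneg_of_nonpos (by linarith [hx.1]) hend)

theorem evenMode_pos_of_half_lt (hq : 0 < q) (hq' : q ≤ 2 * π) (hp : 0 < p) (hA : 0 < A)
    (hB : 0 ≤ B) (hend : evenMode q p A B 1 = 0)
    (hslope : oddMode q p (-(q * A)) (p * B) 1 ≤ 0) (hx : x ∈ Set.Ico (1 / 2 : ℝ) 1) :
    0 < evenMode q p A B x := by
  have hanti : StrictAntiOn (evenMode q p A B) (Set.Icc (1 / 2) 1) := by
    refine strictAntiOn_of_deriv_neg (convex_Icc _ _)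
      (contDiff_evenMode q p A B).continuous.continuousOn fun x hx => ?_
    rw [interior_Icc] at hx
    rw [deriv_evenMode]
    exact oddMode_neg hq hq' hp (neg_neg_of_pos (by positivity)) (by positivity) hslope hx
  have h := hanti ⟨hx.1, hx.2.le⟩ (Set.right_mem_Icc.2 (by norm_num)) hx.2
  rwa [hend] at h

/-- The coefficient of `z_x²` in `Adm.pd_supersolutionFlux` for `φ = evenMode q p A B`. -/
def modeGradCoeff (c τ q p A B x : ℝ) : ℝ :=
  c * (2 * deriv (evenMode q p A B) x ^ 2
    - 4 * evenMode q p A B x * deriv^[2] (evenMode q p A B) x) + τ * evenMode q p A B x ^ 2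

theorem modeGradCoeff_one_sub (c τ q p A B x : ℝ) :
    modeGradCoeff c τ q p A B (1 - x) = modeGradCoeff c τ q p A B x := by
  simp only [modeGradCoeff, Function.iterate_succ_apply, Function.iterate_zero_apply,
    deriv_evenMode, deriv_oddMode, evenMode_one_sub, oddMode_one_sub, neg_sq]

theorem hasDerivAt_modeGradCoeff (hpq : c * p ^ 2 = c * q ^ 2 + τ) (A B x : ℝ) :
    HasDerivAt (modeGradCoeff c τ q p A B)
      (-(evenMode q p A B x * oddMode q p ((4 * c * q ^ 2 + 2 * τ) * (q * A))
        ((4 * c * q ^ 2 + 2 * τ) * (p * B)) x)) x := by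
  have h := fun k => hasDerivAt_iterate_deriv (contDiff_evenMode q p A B) k x
  refine ((((((h 1).pow 2).const_mul 2).sub (((h 0).const_mul 4).mul (h 2))).const_mul c).add
    (((h 0).pow 2).const_mul τ)).congr_deriv ?_
  simp only [Function.iterate_succ_apply, Function.iterate_zero_apply, deriv_evenMode,
    deriv_oddMode, evenMode, oddMode, Nat.cast_ofNat, Nat.add_one_sub_one, pow_one]
  linear_combination (-4 * p * B * sinh (p * (x - 1 / 2))
    * (A * cos (q * (x - 1 / 2)) + B * cosh (p * (x - 1 / 2)))) * hpq

theorem modeGradCoeff_nonneg_of_half_le (hq : 0 < q) (hq' : q ≤ 2 * π) (hp : 0 < p) (hA : 0 < A)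
    (hB : 0 ≤ B) (hc : 0 < c) (hτ : 0 ≤ τ) (hpq : c * p ^ 2 = c * q ^ 2 + τ)
    (hend : evenMode q p A B 1 = 0) (hslope : oddMode q p (-(q * A)) (p * B) 1 ≤ 0)
    (hx : x ∈ Set.Icc (1 / 2 : ℝ) 1) : 0 ≤ modeGradCoeff c τ q p A B x := by
  have hderiv := hasDerivAt_modeGradCoeff hpq A B
  have hanti : AntitoneOn (modeGradCoeff c τ q p A B) (Set.Icc (1 / 2) 1) := by
    refine antitoneOn_of_deriv_nonpos (convex_Icc _ _)
      (fun x _ => (hderiv x).continuousAt.continuousWithinAt)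
      (fun x _ => (hderiv x).differentiableAt.differentiableWithinAt) fun x hx => ?_
    rw [interior_Icc] at hx
    rw [(hderiv x).deriv]
    exact neg_nonpos.2 (mul_nonneg
      (evenMode_pos_of_half_lt hq hq' hp hA hB hend hslope ⟨hx.1.le, hx.2⟩).le
      (oddMode_pos hq hq' hp (by positivity) (by positivity) hx).le)
  refine le_trans ?_ (hanti hx (Set.right_mem_Icc.2 (by norm_num)) hx.2)
  rw [modeGradCoeff, hend]
  simp only [mul_zero, zero_mul, sub_zero, zero_pow two_ne_zero, add_zero]
  positivity

theorem evenMode_pos_and_modeGradCoeff_nonneg (hq : 0 < q) (hq' : q ≤ 2 * π) (hp : 0 < p)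
    (hA : 0 < A) (hB : 0 ≤ B) (hc : 0 < c) (hτ : 0 ≤ τ) (hpq : c * p ^ 2 = c * q ^ 2 + τ)
    (hend : evenMode q p A B 1 = 0) (hslope : oddMode q p (-(q * A)) (p * B) 1 ≤ 0)
    (hx : x ∈ Set.Ioo (0 : ℝ) 1) :
    0 < evenMode q p A B x ∧ 0 ≤ modeGradCoeff c τ q p A B x := by
  wlog h : 1 / 2 ≤ x generalizing x
  · rw [← evenMode_one_sub, ← modeGradCoeff_one_sub]
    exact this ⟨by linarith [hx.2], by linarith [hx.1]⟩ (by linarith)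
  · exact ⟨evenMode_pos_of_half_lt hq hq' hp hA hB hend hslope ⟨h, hx.2⟩,
      modeGradCoeff_nonneg_of_half_le hq hq' hp hA hB hc hτ hpq hend hslope ⟨h, hx.2.le⟩⟩

theorem evenMode_beam_equation (hpq : c * p ^ 2 = c * q ^ 2 + τ) (A B x : ℝ) :
    q ^ 2 * (c * q ^ 2 + τ) * evenMode q p A B x
      = c * deriv^[4] (evenMode q p A B) x - τ * deriv^[2] (evenMode q p A B) x := by
  simp only [Function.iterate_succ_apply, Function.iterate_zero_apply, deriv_evenMode,
    deriv_oddMode, evenMode]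
  linear_combination (-B * (p ^ 2 + q ^ 2) * cosh (p * (x - 1 / 2))) * hpq

variable {Ω : Set (ℝ × ℝ)} {v : ℝ × ℝ → ℝ}

/- `hcond` says that the mode vanishing at the ends still has outward slope `≤ 0` there; equality
would make `q² (c q² + τ)` the exact ground state energy of the beam. -/
theorem Adm.beam_fst (hv : Adm Ω v) (hΩ : ∀ p ∈ Ω, p.1 ∈ Set.Ioo (0 : ℝ) 1) (hc : 0 < c)
    (hτ : 0 ≤ τ) (hq : π ≤ q) (hq' : q ≤ 2 * π) (hp : 0 < p) (hpq : c * p ^ 2 = c * q ^ 2 + τ)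
    (hcond : 0 ≤ q * sin (q / 2) * cosh (p / 2) + p * sinh (p / 2) * cos (q / 2)) :
    q ^ 2 * (c * q ^ 2 + τ) * (∫ r, v r ^ 2)
      ≤ c * (∫ r, uxx v r ^ 2) + τ * ∫ r, pd (1, 0) v r ^ 2 := by
  have hcosh : 0 < cosh (p / 2) := cosh_pos _
  have hcos : cos (q / 2) ≤ 0 :=
    cos_nonpos_of_pi_div_two_le_of_le (by linarith) (by linarith [pi_pos])
  have hmid : ∀ k : ℝ, k * (1 - 1 / 2) = k / 2 := fun k => by ring
  have hend : evenMode q p (cosh (p / 2)) (-cos (q / 2)) 1 = 0 := by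
    simp only [evenMode, hmid]
    ring
  have hslope : oddMode q p (-(q * cosh (p / 2))) (p * -cos (q / 2)) 1 ≤ 0 := by
    simp only [oddMode, hmid]
    linarith
  have hmode := fun r hr => evenMode_pos_and_modeGradCoeff_nonneg (pi_pos.trans_le hq) hq' hp hcosh
    (neg_nonneg.2 hcos) hc hτ hpq hend hslope (hΩ r hr)
  exact hv.le_of_supersolution (contDiff_evenMode q p _ _) hc.le (fun r hr => (hmode r hr).1)
    (fun r _ => (evenMode_beam_equation hpq _ _ _).le) fun r hr => (hmode r hr).2

theorem Adm.beam_snd (hv : Adm Ω v) (hΩ : ∀ p ∈ Ω, p.2 ∈ Set.Ioo (0 : ℝ) 1) (hc : 0 < c)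
    (hτ : 0 ≤ τ) (hq : π ≤ q) (hq' : q ≤ 2 * π) (hp : 0 < p) (hpq : c * p ^ 2 = c * q ^ 2 + τ)
    (hcond : 0 ≤ q * sin (q / 2) * cosh (p / 2) + p * sinh (p / 2) * cos (q / 2)) :
    q ^ 2 * (c * q ^ 2 + τ) * (∫ r, v r ^ 2)
      ≤ c * (∫ r, uyy v r ^ 2) + τ * ∫ r, pd (0, 1) v r ^ 2 := by
  have h := hv.comp_swap.beam_fst (fun p hp => hΩ p.swap hp) hc hτ hq hq' hp hpq hcond
  rwa [uxx, pd_fst_comp_swap, pd_fst_comp_swap, integral_sq_comp_swap, integral_sq_comp_swap,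
    integral_sq_comp_swap] at h

end ClampedBeam

section NumericalBounds

variable {p q c τ P M K e θ x : ℝ}

theorem sin_three_mul_ge (hx : 0 ≤ x) (hx' : x ≤ 1 / 2) :
    3 * (x - x ^ 3 / 6) - 4 * (x - x ^ 3 / 6) ^ 3 ≤ sin (3 * x) := by
  have hsin := sin_ge_sub_cube hx
  have hsin' := sin_le hx
  have h0 : 0 ≤ x - x ^ 3 / 6 := by nlinarith [mul_nonneg hx hx]
  rw [sin_three_mul]
  set s := sin x
  set y := x - x ^ 3 / 6
  have hmono : 4 * (s ^ 2 + s * y + y ^ 2) ≤ 3 := by nlinarith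
  linarith [mul_nonneg (sub_nonneg.2 hsin) (sub_nonneg.2 hmono)]

theorem cos_two_mul_le (hx : 0 ≤ x) (hx' : x ≤ 1) :
    cos (2 * x) ≤ 1 - 2 * x ^ 2 + 2 * x ^ 4 / 3 := by
  have h0 : 0 ≤ x - x ^ 3 / 6 := by nlinarith [mul_nonneg hx hx]
  have hsq : (x - x ^ 3 / 6) ^ 2 ≤ sin x ^ 2 := pow_le_pow_left₀ h0 (sin_ge_sub_cube hx) 2
  rw [cos_two_mul, cos_sq']
  linarith [sq_nonneg (x ^ 3)]

theorem exp_natCast_add_le (n : ℕ) (hx : 0 ≤ x) (hx' : x ≤ 1) :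
    exp (n + x) ≤ 2.7182818286 ^ n * (∑ m ∈ Finset.range 7, x ^ m / m.factorial
      + x ^ 7 * (7 + 1) / ((7 : ℕ).factorial * 7)) := by
  rw [exp_add, ← mul_one (n : ℝ), exp_nat_mul]
  gcongr
  · exact exp_one_lt_d9.le
  · exact exp_bound' hx hx' (by norm_num)

theorem sinh_half_le (hM : exp p ≤ M) : (M + 1) * sinh (p / 2) ≤ (M - 1) * cosh (p / 2) := by
  have hexp : exp (p / 2) = exp p * exp (-(p / 2)) := by rw [← exp_add]; ring_nf
  rw [sinh_eq, cosh_eq, hexp]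
  linarith [mul_le_mul_of_nonneg_right hM (exp_pos (-(p / 2))).le]

theorem mul_sinh_half_le (hp : 0 ≤ p) (hpP : p ≤ P) (hM : exp P ≤ M)
    (hK : P * (M - 1) ≤ K * (M + 1)) : p * sinh (p / 2) ≤ K * cosh (p / 2) := by
  have hM1 : 1 ≤ M := (one_le_exp (hp.trans hpP)).trans hM
  have := (cosh_pos (p / 2)).le
  refine le_of_mul_le_mul_left ?_ (by linarith : 0 < M + 1)
  calc (M + 1) * (p * sinh (p / 2)) = p * ((M + 1) * sinh (p / 2)) := by ring
    _ ≤ p * ((M - 1) * cosh (p / 2)) :=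
      mul_le_mul_of_nonneg_left (sinh_half_le ((exp_le_exp.2 hpP).trans hM)) hp
    _ ≤ P * ((M - 1) * cosh (p / 2)) := by gcongr
    _ = P * (M - 1) * cosh (p / 2) := by ring
    _ ≤ K * (M + 1) * cosh (p / 2) := by gcongr
    _ = (M + 1) * (K * cosh (p / 2)) := by ring

theorem sin_three_pi_div_four : sin (3 * π / 4) = √2 / 2 := by
  rw [← sin_pi_div_four, ← sin_pi_sub]
  ring_nf

theorem cos_three_pi_div_four : cos (3 * π / 4) = -(√2 / 2) := by
  rw [← cos_pi_div_four, ← cos_pi_sub]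
  ring_nf

/- The zero in `θ` lies slightly below `3 π / 4`, where both terms have the same modulus if
`q = K`; hence the expansion about that point. -/
theorem mul_sin_add_mul_cos_nonneg (hq : 0 ≤ q) (hqK : q ≤ K) (he : 0 ≤ e) (he' : e ≤ 1 / 6)
    (hθ : π / 4 ≤ θ) (heθ : 6 * e ≤ 3 * π / 4 - θ)
    (h : (K - q) * (1 - 2 * (3 * e) ^ 2 + 2 * (3 * e) ^ 4 / 3)
      ≤ (K + q) * (3 * (2 * e - (2 * e) ^ 3 / 6) - 4 * (2 * e - (2 * e) ^ 3 / 6) ^ 3)) :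
    0 ≤ q * sin θ + K * cos θ := by
  obtain ⟨ε, rfl⟩ : ∃ ε, θ = 3 * π / 4 - ε := ⟨3 * π / 4 - θ, by ring⟩
  rw [sub_sub_cancel] at heθ
  have hsin : sin (3 * (2 * e)) ≤ sin ε :=
    sin_le_sin_of_le_of_le_pi_div_two (by linarith [pi_pos]) (by linarith) (by linarith)
  have hcos : cos ε ≤ cos (2 * (3 * e)) :=
    cos_le_cos_of_nonneg_of_le_pi (by linarith) (by linarith [pi_pos]) (by linarith)
  have hmain : (K - q) * cos ε ≤ (K + q) * sin ε := calc
    (K - q) * cos ε ≤ (K - q) * (1 - 2 * (3 * e) ^ 2 + 2 * (3 * e) ^ 4 / 3) :=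
      mul_le_mul_of_nonneg_left (hcos.trans (cos_two_mul_le (by linarith) (by linarith)))
        (sub_nonneg.2 hqK)
    _ ≤ _ := h
    _ ≤ (K + q) * sin ε :=
      mul_le_mul_of_nonneg_left ((sin_three_mul_ge (by linarith) (by linarith)).trans hsin)
        (by linarith)
  rw [sin_sub, cos_sub, sin_three_pi_div_four, cos_three_pi_div_four]
  linarith [mul_le_mul_of_nonneg_left hmain (show 0 ≤ √2 / 2 by positivity)]

theorem beam_condition (hp : 0 ≤ p) (hpP : p ≤ P) (hM : exp P ≤ M)
    (hK : P * (M - 1) ≤ K * (M + 1)) (hcos : cos (q / 2) ≤ 0)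
    (h : 0 ≤ q * sin (q / 2) + K * cos (q / 2)) :
    0 ≤ q * sin (q / 2) * cosh (p / 2) + p * sinh (p / 2) * cos (q / 2) :=
  calc 0 ≤ (q * sin (q / 2) + K * cos (q / 2)) * cosh (p / 2) := mul_nonneg h (cosh_pos _).le
    _ = q * sin (q / 2) * cosh (p / 2) + K * cosh (p / 2) * cos (q / 2) := by ring
    _ ≤ _ := add_le_add_right
      (mul_le_mul_of_nonpos_right (mul_sinh_half_le hp hpP hM hK) hcos) _

theorem exists_pos_sq_eq (hc : 0 < c) (hq : 0 < q) (hτ : 0 ≤ τ) (hP : 0 ≤ P)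
    (h : c * q ^ 2 + τ ≤ c * P ^ 2) : ∃ p, 0 < p ∧ p ≤ P ∧ c * p ^ 2 = c * q ^ 2 + τ := by
  have hpos : 0 < q ^ 2 + τ / c := by positivity
  have hsq : c * √(q ^ 2 + τ / c) ^ 2 = c * q ^ 2 + τ := by
    rw [sq_sqrt hpos.le, mul_add, mul_div_cancel₀ _ hc.ne']
  exact ⟨_, sqrt_pos.2 hpos,
    pow_le_pow_iff_left₀ (sqrt_nonneg _) hP two_ne_zero |>.1
      (le_of_mul_le_mul_left (hsq.trans_le h) hc), hsq⟩

theorem exists_beam_wave_number (hc : 0 < c) (hτ : 0 ≤ τ) (hq : π ≤ q) (hP : 0 ≤ P)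
    (hqP : c * q ^ 2 + τ ≤ c * P ^ 2) (hM : exp P ≤ M) (hK : P * (M - 1) ≤ K * (M + 1))
    (hqK : q ≤ K) (he : 0 ≤ e) (he' : e ≤ 1 / 6) (heq : 6 * e ≤ 3 * π / 4 - q / 2)
    (h : (K - q) * (1 - 2 * (3 * e) ^ 2 + 2 * (3 * e) ^ 4 / 3)
      ≤ (K + q) * (3 * (2 * e - (2 * e) ^ 3 / 6) - 4 * (2 * e - (2 * e) ^ 3 / 6) ^ 3)) :
    ∃ p, 0 < p ∧ c * p ^ 2 = c * q ^ 2 + τ ∧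
      0 ≤ q * sin (q / 2) * cosh (p / 2) + p * sinh (p / 2) * cos (q / 2) := by
  have hq0 : 0 < q := pi_pos.trans_le hq
  obtain ⟨p, hp, hpP, hpq⟩ := exists_pos_sq_eq hc hq0 hτ hP hqP
  have hcos : cos (q / 2) ≤ 0 :=
    cos_nonpos_of_pi_div_two_le_of_le (by linarith) (by linarith [pi_pos])
  exact ⟨p, hp, hpq, beam_condition hp.le hpP hM hK hcos
    (mul_sin_add_mul_cos_nonneg hq0.le hqK he he' (by linarith [pi_pos]) heq h)⟩

theorem pi_sq_gt : 9.86960440108 < π ^ 2 :=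
  lt_of_lt_of_le (by norm_num) (pow_le_pow_left₀ (by norm_num) pi_gt_d20.le 2)

theorem pi_sq_lt : π ^ 2 < 9.86960440109 :=
  (pow_lt_pow_left₀ pi_lt_d20 pi_pos.le two_ne_zero).trans (by norm_num)

theorem pi_pow_four_gt : 97.409091 < π ^ 4 :=
  calc (97.409091 : ℝ) < 9.86960440108 ^ 2 := by norm_num
    _ ≤ (π ^ 2) ^ 2 := pow_le_pow_left₀ (by norm_num) pi_sq_gt.le 2
    _ = π ^ 4 := by ring

theorem pi_pow_four_lt : π ^ 4 < 97.409092 :=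
  calc π ^ 4 = (π ^ 2) ^ 2 := by ring
    _ ≤ 9.86960440109 ^ 2 := pow_le_pow_left₀ (sq_nonneg π) pi_sq_lt.le 2
    _ < 97.409092 := by norm_num

end NumericalBounds

section Rectangle

variable {v : ℝ × ℝ → ℝ}

theorem fst_mem_of_mem_Rect_one {p : ℝ × ℝ} (hp : p ∈ Rect 1) : p.1 ∈ Set.Ioo (0 : ℝ) 1 := hp.1

theorem snd_mem_of_mem_Rect_one {p : ℝ × ℝ} (hp : p ∈ Rect 1) : p.2 ∈ Set.Ioo (0 : ℝ) 1 := by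
  simpa using hp.2

/- `4.4024` and `4.331767` approximate from below the wave numbers of the ground states of the two
beams, with fourth-order coefficients `t` and `t⁻¹` for `t = 1.032695 ^ 4`, and tension `2 π²`. -/
theorem Adm.beam_snd_threshold (hv : Adm (Rect 1) v) :
    809.78289 * (∫ p, v p ^ 2)
      ≤ 1.032695 ^ 4 * (∫ p, uyy v p ^ 2) + 2 * π ^ 2 * ∫ p, pd (0, 1) v p ^ 2 := by
  have hM : exp (6.06108886 : ℝ) ≤ 428.86 :=
    calc exp (6.06108886 : ℝ) = exp ((6 : ℕ) + 0.06108886) := by norm_num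
      _ ≤ _ := exp_natCast_add_le 6 (by norm_num) (by norm_num)
      _ ≤ 428.86 := by norm_num [Finset.sum_range_succ, Nat.factorial]
  obtain ⟨p, hp, hpq, hcond⟩ := exists_beam_wave_number (c := 1.032695 ^ 4) (τ := 2 * π ^ 2)
    (q := 4.4024) (P := 6.06108886) (K := 6.03288858) (e := 0.02583241) (by norm_num)
    (by positivity) (by linarith [pi_lt_d20]) (by norm_num) (by linarith [pi_sq_lt]) hM
    (by norm_num) (by norm_num) (by norm_num) (by norm_num) (by linarith [pi_gt_d20]) (by norm_num)
  refine le_trans ?_ (hv.beam_snd (fun p => snd_mem_of_mem_Rect_one) (by norm_num) (by positivity)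
    (by linarith [pi_lt_d20]) (by linarith [pi_gt_d20]) hp hpq hcond)
  gcongr
  linarith [pi_sq_gt]

theorem Adm.beam_fst_threshold (hv : Adm (Rect 1) v) :
    679.96996 * (∫ p, v p ^ 2)
      ≤ (1.032695 ^ 4)⁻¹ * (∫ p, uxx v p ^ 2) + 2 * π ^ 2 * ∫ p, pd (1, 0) v p ^ 2 := by
  have hM : exp (6.4198359 : ℝ) ≤ 613.93 :=
    calc exp (6.4198359 : ℝ) = exp ((6 : ℕ) + 0.4198359) := by norm_num
      _ ≤ _ := exp_natCast_add_le 6 (by norm_num) (by norm_num)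
      _ ≤ 613.93 := by norm_num [Finset.sum_range_succ, Nat.factorial]
  obtain ⟨p, hp, hpq, hcond⟩ := exists_beam_wave_number (c := (1.032695 ^ 4)⁻¹) (τ := 2 * π ^ 2)
    (q := 4.331767) (P := 6.4198359) (K := 6.39895731) (e := 0.03171849) (by norm_num)
    (by positivity) (by linarith [pi_lt_d20]) (by norm_num) (by linarith [pi_sq_lt]) hM
    (by norm_num) (by norm_num) (by norm_num) (by norm_num) (by linarith [pi_gt_d20]) (by norm_num)
  refine le_trans ?_ (hv.beam_fst (fun p => fst_mem_of_mem_Rect_one) (by norm_num) (by positivity)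
    (by linarith [pi_lt_d20]) (by linarith [pi_gt_d20]) hp hpq hcond)
  gcongr
  linarith [pi_sq_gt]

theorem Adm.clamped_snd (hv : Adm (Rect 1) v) :
    (3 * π / 2) ^ 4 * (∫ p, v p ^ 2) ≤ ∫ p, uyy v p ^ 2 := by
  have h34 : 3 * π / 2 / 2 = 3 * π / 4 := by ring
  have h := hv.beam_snd (c := 1) (τ := 0) (q := 3 * π / 2) (p := 3 * π / 2)
    (fun p => snd_mem_of_mem_Rect_one) one_pos le_rfl (by linarith [pi_pos])
    (by linarith [pi_pos]) (by positivity) (by ring) (by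
      rw [h34, sin_three_pi_div_four, cos_three_pi_div_four]
      have := mul_le_mul_of_nonneg_left (sinh_lt_cosh (3 * π / 4)).le
        (show 0 ≤ 3 * π / 2 * (√2 / 2) by positivity)
      linarith)
  linear_combination h

theorem Adm.stretched_beam_fst (hv : Adm (Rect 1) v) {t₀ t l : ℝ} (ht₀ : 0 < t₀) (ht : t₀ ≤ t)
    (hl : l * (∫ p, v p ^ 2)
      ≤ t₀⁻¹ * (∫ p, uxx v p ^ 2) + 2 * π ^ 2 * ∫ p, pd (1, 0) v p ^ 2) :
    (2 * π ^ 4 + t₀ / t * (l - 2 * π ^ 4)) * (∫ p, v p ^ 2)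
      ≤ t⁻¹ * (∫ p, uxx v p ^ 2) + 2 * π ^ 2 * ∫ p, pd (1, 0) v p ^ 2 := by
  have htpos : 0 < t := ht₀.trans_le ht
  have hwirtinger := hv.wirtinger_fst fun p => fst_mem_of_mem_Rect_one
  set D := ∫ p, v p ^ 2
  set E := ∫ p, pd (1, 0) v p ^ 2
  set A := ∫ p, uxx v p ^ 2
  have hratio : 0 ≤ 1 - t₀ / t := sub_nonneg.2 ((div_le_one htpos).2 ht)
  calc (2 * π ^ 4 + t₀ / t * (l - 2 * π ^ 4)) * D
      = t₀ / t * (l * D) + (1 - t₀ / t) * (2 * π ^ 2 * (π ^ 2 * D)) := by ring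
    _ ≤ t₀ / t * (t₀⁻¹ * A + 2 * π ^ 2 * E) + (1 - t₀ / t) * (2 * π ^ 2 * E) := by gcongr
    _ = t⁻¹ * A + 2 * π ^ 2 * E := by field_simp; ring

theorem threshold_bound_le {t : ℝ} (ht : 1.032695 ^ 4 ≤ t) :
    1294.9346 ≤ 809.78289 + (t - 1.032695 ^ 4) * (3 * π / 2) ^ 4
      + 1.032695 ^ 4 / t * (679.96996 - 2 * π ^ 4) := by
  have htpos : 0 < t := lt_of_lt_of_le (by norm_num) ht
  have hratio : 1 - (t - 1.032695 ^ 4) ≤ 1.032695 ^ 4 / t := by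
    rw [le_div_iff₀ htpos]
    nlinarith
  have hgap := mul_le_mul_of_nonneg_right hratio
    (by linarith [pi_pow_four_lt] : (0 : ℝ) ≤ 679.96996 - 2 * π ^ 4)
  have hslope := mul_le_mul_of_nonneg_left
    (by linarith [pi_pow_four_gt] : 679.96996 - 2 * π ^ 4 ≤ (3 * π / 2) ^ 4) (sub_nonneg.2 ht)
  linarith [pi_pow_four_lt]

theorem Adm.lower_bound_energy (hv : Adm (Rect 1) v) {t : ℝ} (ht : 1.032695 ^ 4 ≤ t) :
    1294.9346 * (∫ p, v p ^ 2) ≤ energy t v := by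
  have hxx := hv.stretched_beam_fst (by norm_num) ht hv.beam_fst_threshold
  have hxy := hv.mixed_lower_bound (fun p => fst_mem_of_mem_Rect_one)
    fun p => snd_mem_of_mem_Rect_one
  have hyy := hv.beam_snd_threshold
  have hyy' := mul_le_mul_of_nonneg_left hv.clamped_snd (sub_nonneg.2 ht)
  have hbound := mul_le_mul_of_nonneg_right (threshold_bound_le ht)
    (integral_nonneg fun p => sq_nonneg (v p) : 0 ≤ ∫ p, v p ^ 2)
  unfold energy
  linear_combination hbound + hxx + 2 * hxy + hyy + hyy'

end Rectangle

section InteriorApproximation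

open scoped ContDiff

variable {m j : ℕ} {F G : ℕ → ℝ → ℝ} {f g h : ℝ → ℝ} {x : ℝ}

/-- Smooth functions `F n` that eventually coincide with `g` near each point of `(0, 1)` and whose
derivatives up to order `m` are bounded on `[0, 1]` uniformly in `n`; this is what dominated
convergence of the derivatives requires. -/
structure InteriorApprox (m : ℕ) (F : ℕ → ℝ → ℝ) (g : ℝ → ℝ) : Prop where
  contDiff : ∀ n, ContDiff ℝ ∞ (F n)
  exists_bound : ∀ j ≤ m, ∃ C, ∀ n, ∀ x ∈ Set.Icc (0 : ℝ) 1, |iteratedDeriv j (F n) x| ≤ C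
  eventuallyEq : ∀ x ∈ Set.Ioo (0 : ℝ) 1, ∀ᶠ n in atTop, F n =ᶠ[nhds x] g

theorem abs_iteratedDeriv_mul_le (hf : ContDiff ℝ ∞ f) (hg : ContDiff ℝ ∞ g) {C D : ℕ → ℝ}
    (hC : ∀ i ≤ j, |iteratedDeriv i f x| ≤ C i) (hD : ∀ i ≤ j, |iteratedDeriv i g x| ≤ D i) :
    |iteratedDeriv j (fun x => f x * g x) x|
      ≤ ∑ i ∈ Finset.range (j + 1), j.choose i * C i * D (j - i) := by
  rw [iteratedDeriv_fun_mul (contDiff_infty.1 hf j).contDiffAt (contDiff_infty.1 hg j).contDiffAt]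
  refine (Finset.abs_sum_le_sum_abs _ _).trans (Finset.sum_le_sum fun i hi => ?_)
  have hij : i ≤ j := Finset.mem_range_succ_iff.1 hi
  have hC0 : 0 ≤ C i := (abs_nonneg _).trans (hC i hij)
  rw [abs_mul, abs_mul, Nat.abs_cast]
  gcongr
  · exact hC i hij
  · exact hD _ (Nat.sub_le j i)

theorem InteriorApprox.mul (hF : InteriorApprox m F f) (hG : InteriorApprox m G g) :
    InteriorApprox m (fun n x => F n x * G n x) (fun x => f x * g x) := by
  choose! C hC using hF.exists_bound
  choose! D hD using hG.exists_bound
  refine ⟨fun n => (hF.contDiff n).mul (hG.contDiff n), fun j hj => ⟨_, fun n x hx =>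
    abs_iteratedDeriv_mul_le (hF.contDiff n) (hG.contDiff n)
      (fun i hi => hC i (hi.trans hj) n x hx) fun i hi => hD i (hi.trans hj) n x hx⟩,
    fun x hx => ?_⟩
  filter_upwards [hF.eventuallyEq x hx, hG.eventuallyEq x hx] with n hf hg using hf.mul hg

theorem interiorApprox_const (m : ℕ) (hh : ContDiff ℝ ∞ h) : InteriorApprox m (fun _ => h) h := by
  refine ⟨fun _ => hh, fun j _ => ?_, fun x _ => .of_forall fun _ => .rfl⟩
  obtain ⟨C, hC⟩ := isCompact_Icc.exists_bound_of_continuousOn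
    (contDiff_infty.1 hh j).continuous_iteratedDeriv'.continuousOn
  exact ⟨C, fun _ => hC⟩

theorem InteriorApprox.reflect (hF : InteriorApprox m F f) :
    InteriorApprox m (fun n x => F n (1 - x)) (fun x => f (1 - x)) := by
  refine ⟨fun n => (hF.contDiff n).comp (contDiff_const.sub contDiff_id), fun j hj => ?_,
    fun x hx => ?_⟩
  · obtain ⟨C, hC⟩ := hF.exists_bound j hj
    refine ⟨C, fun n x hx => ?_⟩
    rw [iteratedDeriv_comp_const_sub]
    simpa [abs_mul, abs_pow] using hC n (1 - x) ⟨by linarith [hx.2], by linarith [hx.1]⟩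
  · filter_upwards [hF.eventuallyEq (1 - x) ⟨by linarith [hx.2], by linarith [hx.1]⟩] with n hn
    exact ((continuous_const.sub continuous_id).tendsto x).eventually hn

/-- A smooth cutoff at the origin, vanishing for `x ≤ 1 / (n + 1)` and equal to `1` for
`x ≥ 2 / (n + 1)`. -/
def originCutoff (n : ℕ) (x : ℝ) : ℝ := smoothTransition ((n + 1) * x - 1)

theorem contDiff_originCutoff (n : ℕ) : ContDiff ℝ ∞ (originCutoff n) :=
  smoothTransition.contDiff.comp ((contDiff_const.mul contDiff_id).sub contDiff_const)

theorem originCutoff_eq_zero {n : ℕ} (hx : x ≤ ((n : ℝ) + 1)⁻¹) : originCutoff n x = 0 := by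
  refine smoothTransition.zero_of_nonpos ?_
  rw [sub_nonpos, ← le_inv_mul_iff₀ (by positivity), mul_one]
  exact hx

theorem eventually_originCutoff_eq_one (hx : 0 < x) :
    ∀ᶠ n in atTop, originCutoff n =ᶠ[nhds x] fun _ => 1 := by
  obtain ⟨N, hN⟩ := exists_nat_gt (2 / (x / 2))
  filter_upwards [eventually_ge_atTop N] with n hn
  filter_upwards [lt_mem_nhds (half_lt_self hx)] with y hy
  refine smoothTransition.one_of_one_le ?_
  have hNn : (N : ℝ) ≤ n := Nat.cast_le.2 hn
  nlinarith [(div_lt_iff₀ (half_pos hx)).1 hN]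

/- The estimate is scale invariant, and the transition takes place on a compact interval. -/
theorem exists_bound_pow_mul_iteratedDeriv_originCutoff (k : ℕ) :
    ∃ C, ∀ n x, 0 ≤ x → |x ^ k * iteratedDeriv k (originCutoff n) x| ≤ C := by
  have hsmooth : ContDiff ℝ k fun z => smoothTransition (z - 1) :=
    smoothTransition.contDiff.comp (contDiff_id.sub contDiff_const)
  obtain ⟨C, hC⟩ := (isCompact_Icc (a := (0 : ℝ)) (b := 2)).exists_bound_of_continuousOn
    ((continuous_id.pow k).mul hsmooth.continuous_iteratedDeriv').continuousOn
  refine ⟨max C 1, fun n x hx => ?_⟩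
  have hscale : x ^ k * iteratedDeriv k (originCutoff n) x = ((n + 1) * x) ^ k *
      iteratedDeriv k (fun z => smoothTransition (z - 1)) ((n + 1) * x) := by
    unfold originCutoff
    rw [iteratedDeriv_comp_const_mul hsmooth, mul_pow]
    ring
  have hz : 0 ≤ ((n : ℝ) + 1) * x := by positivity
  rw [hscale]
  generalize ((n : ℝ) + 1) * x = z at hz
  rcases le_or_gt z 2 with h | h
  · exact (hC z ⟨hz, h⟩).trans (le_max_left _ _)
  · have hone : (fun z => smoothTransition (z - 1)) =ᶠ[nhds z] fun _ => 1 := by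
      filter_upwards [lt_mem_nhds h] with y hy using smoothTransition.one_of_one_le (by linarith)
    rw [hone.iteratedDeriv_eq, iteratedDeriv_const]
    split_ifs with hk <;> simp [hk]

theorem abs_choose_mul_iteratedDeriv_pow_mul_le {i : ℕ} (hi : i ≤ j) (hj : j ≤ m) {C y : ℝ}
    (hx : x ∈ Set.Icc (0 : ℝ) 1) (hC : |x ^ (j - i) * y| ≤ C) :
    |j.choose i * iteratedDeriv i (fun x => x ^ m) x * y|
      ≤ j.choose i * m.descFactorial i * C := by
  rw [iteratedDeriv_pow, show m - i = (j - i) + (m - j) by lia, pow_add]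
  calc _ = j.choose i * m.descFactorial i * x ^ (m - j) * |x ^ (j - i) * y| := by
        simp only [abs_mul, abs_pow, Nat.abs_cast, abs_of_nonneg hx.1]
        ring
    _ ≤ j.choose i * m.descFactorial i * 1 * C := by
        gcongr
        exact pow_le_one₀ hx.1 hx.2
    _ = _ := by ring

theorem interiorApprox_pow_mul_originCutoff (m : ℕ) :
    InteriorApprox m (fun n x => x ^ m * originCutoff n x) (fun x => x ^ m) := by
  choose C hC using exists_bound_pow_mul_iteratedDeriv_originCutoff
  refine ⟨fun n => (contDiff_id.pow m).mul (contDiff_originCutoff n), fun j hj =>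
    ⟨∑ i ∈ Finset.range (j + 1), j.choose i * m.descFactorial i * C (j - i), fun n x hx => ?_⟩,
    fun x hx => ?_⟩
  · rw [iteratedDeriv_fun_mul (f := fun x => x ^ m) (contDiff_id.pow m).contDiffAt
      (contDiff_infty.1 (contDiff_originCutoff n) j).contDiffAt]
    exact (Finset.abs_sum_le_sum_abs _ _).trans <| Finset.sum_le_sum fun i hi =>
      abs_choose_mul_iteratedDeriv_pow_mul_le (Finset.mem_range_succ_iff.1 hi) hj hx
        (hC _ n x hx.1)
  · filter_upwards [eventually_originCutoff_eq_one hx.1] with n hn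
    filter_upwards [hn] with y hy
    rw [hy, mul_one]

/-- The truncation of `h x * (x ^ m * (1 - x) ^ m)` to a compact subset of `(0, 1)`. -/
def clampedSeq (m : ℕ) (h : ℝ → ℝ) (n : ℕ) (x : ℝ) : ℝ :=
  h x * (x ^ m * originCutoff n x * ((1 - x) ^ m * originCutoff n (1 - x)))

theorem interiorApprox_clampedSeq (m : ℕ) (hh : ContDiff ℝ ∞ h) :
    InteriorApprox m (clampedSeq m h) (fun x => h x * (x ^ m * (1 - x) ^ m)) :=
  (interiorApprox_const m hh).mul
    ((interiorApprox_pow_mul_originCutoff m).mul (interiorApprox_pow_mul_originCutoff m).reflect)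

theorem tsupport_clampedSeq_subset (m : ℕ) (h : ℝ → ℝ) (n : ℕ) :
    tsupport (clampedSeq m h n) ⊆ Set.Ioo 0 1 := by
  have hn : (0 : ℝ) < ((n : ℝ) + 1)⁻¹ := by positivity
  refine (closure_minimal (fun x hx => ?_) isClosed_Icc).trans
    (Set.Icc_subset_Ioo hn (sub_lt_self 1 hn))
  by_contra hmem
  refine hx ?_
  rw [Set.mem_Icc, not_and_or, not_le, not_le] at hmem
  rcases hmem with hlt | hlt
  · rw [clampedSeq, originCutoff_eq_zero hlt.le, mul_zero, zero_mul, mul_zero]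
  · rw [clampedSeq, originCutoff_eq_zero (x := 1 - x) (by linarith), mul_zero, mul_zero, mul_zero]

/-- The `L²(0, 1)` inner product of the `j`-th derivatives. -/
def gram (j : ℕ) (f g : ℝ → ℝ) : ℝ := ∫ x in Set.Ioo 0 1, iteratedDeriv j f x * iteratedDeriv j g x

theorem InteriorApprox.tendsto_gram (hF : InteriorApprox m F f) (hG : InteriorApprox m G g)
    (hj : j ≤ m) : Tendsto (fun n => gram j (F n) (G n)) atTop (nhds (gram j f g)) := by
  obtain ⟨C, hC⟩ := hF.exists_bound j hj
  obtain ⟨D, hD⟩ := hG.exists_bound j hj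
  refine tendsto_integral_of_dominated_convergence (fun _ => C * D) (fun n => ?_)
    (integrable_const _) (fun n => ?_) ?_
  · exact ((contDiff_infty.1 (hF.contDiff n) j).continuous_iteratedDeriv'.mul
      (contDiff_infty.1 (hG.contDiff n) j).continuous_iteratedDeriv').aestronglyMeasurable
  · filter_upwards [ae_restrict_mem measurableSet_Ioo] with x hx
    rw [norm_mul]
    have hFx := hC n x (Set.Ioo_subset_Icc_self hx)
    exact mul_le_mul hFx (hD n x (Set.Ioo_subset_Icc_self hx)) (norm_nonneg _)
      ((abs_nonneg _).trans hFx)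
  · filter_upwards [ae_restrict_mem measurableSet_Ioo] with x hx
    refine tendsto_const_nhds.congr' ?_
    filter_upwards [hF.eventuallyEq x hx, hG.eventuallyEq x hx] with n hf hg
    rw [hf.iteratedDeriv_eq, hg.iteratedDeriv_eq]

theorem tsupport_iteratedDeriv_subset (j : ℕ) (f : ℝ → ℝ) :
    tsupport (iteratedDeriv j f) ⊆ tsupport f := by
  induction j with
  | zero => rw [iteratedDeriv_zero]
  | succ j ih => exact iteratedDeriv_succ (n := j) (f := f) ▸ tsupport_deriv_subset.trans ih

theorem integrable_iteratedDeriv_mul (hf : ContDiff ℝ ∞ f) (hg : ContDiff ℝ ∞ g)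
    (hsupp : tsupport f ⊆ Set.Ioo 0 1) (j : ℕ) :
    Integrable fun x => iteratedDeriv j f x * iteratedDeriv j g x := by
  refine ((contDiff_infty.1 hf j).continuous_iteratedDeriv'.mul
    (contDiff_infty.1 hg j).continuous_iteratedDeriv').integrable_of_hasCompactSupport
      (HasCompactSupport.mul_right ?_)
  exact isCompact_Icc.of_isClosed_subset (isClosed_tsupport _)
    (((tsupport_iteratedDeriv_subset j f).trans hsupp).trans Set.Ioo_subset_Icc_self)

theorem integral_iteratedDeriv_mul (hsupp : tsupport f ⊆ Set.Ioo 0 1) (j : ℕ) (g : ℝ → ℝ) :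
    ∫ x, iteratedDeriv j f x * iteratedDeriv j g x = gram j f g := by
  refine (setIntegral_eq_integral_of_forall_compl_eq_zero fun x hx => ?_).symm
  rw [image_eq_zero_of_notMem_tsupport fun h =>
    hx (hsupp (tsupport_iteratedDeriv_subset j f h)), zero_mul]

end InteriorApproximation

section RitzMethod

open scoped ContDiff

variable {ι : Type*} [Fintype ι] (σ : ι → ℝ) {f g : ι → ℝ → ℝ}

/-- The finite sum `∑ r, σ r • f r ⊗ g r` of tensor products. -/
def tensorSum (σ : ι → ℝ) (f g : ι → ℝ → ℝ) (p : ℝ × ℝ) : ℝ := ∑ r, σ r * (f r p.1 * g r p.2)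

theorem hasFDerivAt_tensorSum (hf : ∀ r, Differentiable ℝ (f r)) (hg : ∀ r, Differentiable ℝ (g r))
    (p : ℝ × ℝ) : HasFDerivAt (tensorSum σ f g) (∑ r, σ r •
      (f r p.1 • (deriv (g r) p.2 • ContinuousLinearMap.snd ℝ ℝ ℝ)
        + g r p.2 • (deriv (f r) p.1 • ContinuousLinearMap.fst ℝ ℝ ℝ))) p := by
  refine HasFDerivAt.fun_sum fun r _ => HasFDerivAt.const_mul ?_ _
  exact ((hf r p.1).hasDerivAt.comp_hasFDerivAt p hasFDerivAt_fst).mul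
    ((hg r p.2).hasDerivAt.comp_hasFDerivAt p hasFDerivAt_snd)

theorem pd_fst_tensorSum (hf : ∀ r, Differentiable ℝ (f r)) (hg : ∀ r, Differentiable ℝ (g r)) :
    pd (1, 0) (tensorSum σ f g) = tensorSum σ (fun r => deriv (f r)) g := by
  funext p
  rw [pd, (hasFDerivAt_tensorSum σ hf hg p).fderiv]
  simp [tensorSum, mul_comm]

theorem pd_snd_tensorSum (hf : ∀ r, Differentiable ℝ (f r)) (hg : ∀ r, Differentiable ℝ (g r)) :
    pd (0, 1) (tensorSum σ f g) = tensorSum σ f (fun r => deriv (g r)) := by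
  funext p
  rw [pd, (hasFDerivAt_tensorSum σ hf hg p).fderiv]
  simp [tensorSum]

theorem iterate_pd_tensorSum (hf : ∀ r, ContDiff ℝ ∞ (f r)) (hg : ∀ r, ContDiff ℝ ∞ (g r))
    (i j : ℕ) : (pd (1, 0))^[i] ((pd (0, 1))^[j] (tensorSum σ f g)) =
      tensorSum σ (fun r => iteratedDeriv i (f r)) (fun r => iteratedDeriv j (g r)) := by
  have hdiff {k : ι → ℝ → ℝ} (hk : ∀ r, ContDiff ℝ ∞ (k r)) (i : ℕ) (r : ι) :
      Differentiable ℝ (iteratedDeriv i (k r)) :=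
    (contDiff_infty.1 (hk r) (i + 1)).differentiable_iteratedDeriv' i
  have hsnd : (pd (0, 1))^[j] (tensorSum σ f g) =
      tensorSum σ (fun r => iteratedDeriv 0 (f r)) fun r => iteratedDeriv j (g r) := by
    induction j with
    | zero => simp only [Function.iterate_zero_apply, iteratedDeriv_zero]
    | succ j ih =>
      rw [Function.iterate_succ_apply', ih, pd_snd_tensorSum σ (hdiff hf 0) (hdiff hg j)]
      simp only [iteratedDeriv_succ]
  induction i with
  | zero => rw [hsnd, Function.iterate_zero_apply]
  | succ i ih =>
    rw [Function.iterate_succ_apply', ih, pd_fst_tensorSum σ (hdiff hf i) (hdiff hg j)]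
    simp only [iteratedDeriv_succ]

theorem integral_tensorSum_sq (hf : ∀ r s, Integrable fun x => f r x * f s x)
    (hg : ∀ r s, Integrable fun x => g r x * g s x) :
    ∫ p, tensorSum σ f g p ^ 2 =
      ∑ r, ∑ s, σ r * σ s * ((∫ x, f r x * f s x) * ∫ y, g r y * g s y) := by
  have hint : ∀ r s, Integrable fun p : ℝ × ℝ =>
      σ r * σ s * ((f r p.1 * f s p.1) * (g r p.2 * g s p.2)) := fun r s =>
    ((hf r s).mul_prod (hg r s)).const_mul _
  have hexpand : ∀ p, tensorSum σ f g p ^ 2 = ∑ r, ∑ s,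
      σ r * σ s * ((f r p.1 * f s p.1) * (g r p.2 * g s p.2)) := fun p => by
    rw [pow_two, tensorSum, Finset.sum_mul_sum]
    exact Finset.sum_congr rfl fun r _ => Finset.sum_congr rfl fun s _ => by ring
  simp only [hexpand]
  rw [integral_finsetSum _ fun r _ => integrable_finsetSum _ fun s _ => hint r s]
  refine Finset.sum_congr rfl fun r _ => ?_
  rw [integral_finsetSum _ fun s _ => hint r s]
  refine Finset.sum_congr rfl fun s _ => ?_
  rw [integral_const_mul, Measure.volume_eq_prod, integral_prod_mul (fun x => f r x * f s x)
    (fun y => g r y * g s y)]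

theorem adm_mul_prod {f g : ℝ → ℝ} (hf : ContDiff ℝ ∞ f) (hg : ContDiff ℝ ∞ g)
    (hf' : tsupport f ⊆ Set.Ioo 0 1) (hg' : tsupport g ⊆ Set.Ioo 0 1) :
    Adm (Rect 1) (fun p => f p.1 * g p.2) := by
  have hsupp : tsupport (fun p : ℝ × ℝ => f p.1 * g p.2) ⊆ tsupport f ×ˢ tsupport g :=
    closure_minimal (fun p hp => ⟨subset_tsupport f (left_ne_zero_of_mul hp),
      subset_tsupport g (right_ne_zero_of_mul hp)⟩)
      ((isClosed_tsupport f).prod (isClosed_tsupport g))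
  refine ⟨(hf.comp contDiff_fst).mul (hg.comp contDiff_snd),
    (isCompact_Icc.prod isCompact_Icc).of_isClosed_subset (isClosed_tsupport _) (hsupp.trans
      (Set.prod_mono (hf'.trans Set.Ioo_subset_Icc_self) (hg'.trans Set.Ioo_subset_Icc_self))), ?_⟩
  simpa only [Rect, one_div, inv_one] using hsupp.trans (Set.prod_mono hf' hg')

theorem adm_tensorSum (hf : ∀ r, ContDiff ℝ ∞ (f r)) (hg : ∀ r, ContDiff ℝ ∞ (g r))
    (hf' : ∀ r, tsupport (f r) ⊆ Set.Ioo 0 1) (hg' : ∀ r, tsupport (g r) ⊆ Set.Ioo 0 1) :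
    Adm (Rect 1) (tensorSum σ f g) := by
  have hsum : tensorSum σ f g = ∑ r, fun p : ℝ × ℝ => σ r * (f r p.1 * g r p.2) := by
    funext p
    rw [Finset.sum_apply, tensorSum]
  rw [hsum]
  refine Finset.sum_induction _ (Adm (Rect 1)) (fun u v hu hv => hu.add hv) ?_ fun r _ =>
    (adm_mul_prod (hf r) (hg r) (hf' r) (hg' r)).mul_left contDiff_const
  exact ⟨contDiff_const, HasCompactSupport.zero, by simp [tsupport]⟩

/-- The squared norm of `∑ r, σ r • f r ⊗ f r` in `L²((0, 1)²)`. -/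
def ritzMass (σ : ι → ℝ) (f : ι → ℝ → ℝ) : ℝ :=
  ∑ r, ∑ s, σ r * σ s * (gram 0 (f r) (f s) * gram 0 (f r) (f s))

/-- The value of `energy t` on `∑ r, σ r • f r ⊗ f r`. -/
def ritzEnergy (t : ℝ) (σ : ι → ℝ) (f : ι → ℝ → ℝ) : ℝ :=
  ∑ r, ∑ s, σ r * σ s * (t⁻¹ * (gram 2 (f r) (f s) * gram 0 (f r) (f s))
    + 2 * (gram 1 (f r) (f s) * gram 1 (f r) (f s)) + t * (gram 0 (f r) (f s) * gram 2 (f r) (f s)))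

theorem integral_tensorSum_iteratedDeriv_sq (hf : ∀ r, ContDiff ℝ ∞ (f r))
    (hf' : ∀ r, tsupport (f r) ⊆ Set.Ioo 0 1) (i j : ℕ) :
    ∫ p, tensorSum σ (fun r => iteratedDeriv i (f r)) (fun r => iteratedDeriv j (f r)) p ^ 2 =
      ∑ r, ∑ s, σ r * σ s * (gram i (f r) (f s) * gram j (f r) (f s)) := by
  rw [integral_tensorSum_sq σ
    (fun r s => integrable_iteratedDeriv_mul (hf r) (hf s) (hf' r) i)
    (fun r s => integrable_iteratedDeriv_mul (hf r) (hf s) (hf' r) j)]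
  simp only [integral_iteratedDeriv_mul (hf' _)]

theorem integral_tensorSum_sq_eq_ritzMass (hf : ∀ r, ContDiff ℝ ∞ (f r))
    (hf' : ∀ r, tsupport (f r) ⊆ Set.Ioo 0 1) : ∫ p, tensorSum σ f f p ^ 2 = ritzMass σ f := by
  simpa only [iteratedDeriv_zero, ritzMass] using integral_tensorSum_iteratedDeriv_sq σ hf hf' 0 0

theorem energy_tensorSum (hf : ∀ r, ContDiff ℝ ∞ (f r))
    (hf' : ∀ r, tsupport (f r) ⊆ Set.Ioo 0 1) (t : ℝ) :
    energy t (tensorSum σ f f) = ritzEnergy t σ f := by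
  have hxx : uxx (tensorSum σ f f) = _ := iterate_pd_tensorSum σ hf hf 2 0
  have hyy : uyy (tensorSum σ f f) = _ := iterate_pd_tensorSum σ hf hf 0 2
  have hxy : uxy (tensorSum σ f f) = _ := ((adm_tensorSum σ hf hf hf' hf').pd_comm _ _).trans
    (iterate_pd_tensorSum σ hf hf 1 1)
  rw [energy, hxx, hyy, hxy]
  simp only [integral_tensorSum_iteratedDeriv_sq σ hf hf', ritzEnergy, Finset.mul_sum,
    ← Finset.sum_add_distrib]
  exact Finset.sum_congr rfl fun r _ => Finset.sum_congr rfl fun s _ => by ring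

/- The truncations are admissible and their Gram matrices converge. -/
theorem lam1_mul_ritzMass_le_ritzEnergy {a : ℝ} (ha : 0 < a) {h : ι → ℝ → ℝ}
    (hh : ∀ r, ContDiff ℝ ∞ (h r)) (hf : ∀ r x, f r x = h r x * (x ^ 2 * (1 - x) ^ 2)) :
    lam1 a * ritzMass σ f ≤ ritzEnergy (a ^ 4) σ f := by
  obtain rfl : f = fun r x => h r x * (x ^ 2 * (1 - x) ^ 2) := funext₂ hf
  have hseq := fun r => interiorApprox_clampedSeq 2 (hh r)
  have hgram := fun {j} (hj : j ≤ 2) r s => (hseq r).tendsto_gram (hseq s) hj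
  have hmass : Tendsto (fun n => ritzMass σ fun r => clampedSeq 2 (h r) n) atTop
      (nhds (ritzMass σ fun r x => h r x * (x ^ 2 * (1 - x) ^ 2))) :=
    tendsto_finsetSum _ fun r _ => tendsto_finsetSum _ fun s _ =>
      ((hgram (by simp) r s).mul (hgram (by simp) r s)).const_mul _
  have henergy : Tendsto (fun n => ritzEnergy (a ^ 4) σ fun r => clampedSeq 2 (h r) n) atTop
      (nhds (ritzEnergy (a ^ 4) σ fun r x => h r x * (x ^ 2 * (1 - x) ^ 2))) :=
    tendsto_finsetSum _ fun r _ => tendsto_finsetSum _ fun s _ =>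
      (((((hgram le_rfl r s).mul (hgram (by simp) r s)).const_mul _).add
        (((hgram (by simp) r s).mul (hgram (by simp) r s)).const_mul 2)).add
        (((hgram (by simp) r s).mul (hgram le_rfl r s)).const_mul _)).const_mul _
  refine le_of_tendsto_of_tendsto' (hmass.const_mul (lam1 a)) henergy fun n => ?_
  have hsmooth := fun r => (hseq r).contDiff n
  have hsupp := fun r => tsupport_clampedSeq_subset 2 (h r) n
  rw [← integral_tensorSum_sq_eq_ritzMass σ hsmooth hsupp, ← energy_tensorSum σ hsmooth hsupp]
  exact (le_lam1_iff ha).1 le_rfl _ (adm_tensorSum σ hsmooth hsmooth hsupp hsupp)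

end RitzMethod

section TrialFunctions

open scoped ContDiff

variable {ι : Type*} [Fintype ι]

/-- The polynomial `∑ k, b k * (2 * x - 1) ^ e k`. -/
def centredSum (e : ι → ℕ) (b : ι → ℝ) (x : ℝ) : ℝ := ∑ k, b k * (2 * x - 1) ^ e k

theorem contDiff_centredSum (e : ι → ℕ) (b : ι → ℝ) : ContDiff ℝ ∞ (centredSum e b) := by
  unfold centredSum
  fun_prop

theorem iteratedDeriv_two_mul_sub_one_pow (m j : ℕ) (x : ℝ) :
    iteratedDeriv j (fun x : ℝ => (2 * x - 1) ^ m) x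
      = 2 ^ j * m.descFactorial j * (2 * x - 1) ^ (m - j) := by
  rw [iteratedDeriv_comp_const_mul (f := fun x => (x - 1) ^ m) (by fun_prop),
    iteratedDeriv_comp_sub_const j (fun x => x ^ m)]
  simp only [iteratedDeriv_pow]
  ring

theorem iteratedDeriv_centredSum (e : ι → ℕ) (b : ι → ℝ) (j : ℕ) (x : ℝ) :
    iteratedDeriv j (centredSum e b) x
      = ∑ k, b k * (2 ^ j * (e k).descFactorial j * (2 * x - 1) ^ (e k - j)) := by
  unfold centredSum
  rw [iteratedDeriv_fun_sum fun k _ => by fun_prop]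
  simp only [iteratedDeriv_const_mul_field, iteratedDeriv_two_mul_sub_one_pow]

theorem integral_two_mul_sub_one_pow (m : ℕ) :
    ∫ x in Set.Ioo (0 : ℝ) 1, (2 * x - 1) ^ m = (1 - (-1) ^ (m + 1)) / (2 * (m + 1)) := by
  rw [← integral_Ioc_eq_integral_Ioo, ← intervalIntegral.integral_of_le zero_le_one,
    intervalIntegral.integral_comp_mul_sub (fun x => x ^ m) two_ne_zero, integral_pow]
  norm_num
  field_simp

/-- The entry `gram j ((2 * x - 1) ^ m) ((2 * x - 1) ^ n)`, kept in `ℚ` so that the Gram matrices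
of the trial functions are computed by kernel evaluation. -/
def centredMoment (j m n : ℕ) : ℚ :=
  4 ^ j * m.descFactorial j * n.descFactorial j *
    ((1 - (-1) ^ (m - j + (n - j) + 1)) / (2 * ((m - j + (n - j) : ℕ) + 1)))

theorem gram_centredSum (e : ι → ℕ) (b c : ι → ℝ) (j : ℕ) :
    gram j (centredSum e b) (centredSum e c) =
      ∑ k, ∑ l, b k * c l * centredMoment j (e k) (e l) := by
  have hexpand : ∀ x, iteratedDeriv j (centredSum e b) x * iteratedDeriv j (centredSum e c) x =
      ∑ k, ∑ l, b k * c l * (4 ^ j * (e k).descFactorial j * (e l).descFactorial j) *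
        (2 * x - 1) ^ (e k - j + (e l - j)) := fun x => by
    rw [iteratedDeriv_centredSum, iteratedDeriv_centredSum, Finset.sum_mul_sum]
    refine Finset.sum_congr rfl fun k _ => Finset.sum_congr rfl fun l _ => ?_
    rw [pow_add, show (4 : ℝ) ^ j = 2 ^ j * 2 ^ j by rw [← mul_pow]; norm_num]
    ring
  have hint : ∀ (c : ℝ) (m : ℕ), IntegrableOn (fun x : ℝ => c * (2 * x - 1) ^ m) (Set.Ioo 0 1) :=
    fun c m => (Continuous.integrableOn_Icc (by fun_prop)).mono_set Set.Ioo_subset_Icc_self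
  simp only [gram, hexpand]
  rw [integral_finsetSum _ fun k _ => integrable_finsetSum _ fun l _ => hint _ _]
  refine Finset.sum_congr rfl fun k _ => ?_
  rw [integral_finsetSum _ fun l _ => hint _ _]
  refine Finset.sum_congr rfl fun l _ => ?_
  rw [integral_const_mul, integral_two_mul_sub_one_pow, mul_assoc]
  push_cast [centredMoment]
  rfl

/-- Numerically optimised data of the four trial functions: row `r` lists the coefficients, in
powers of `(2 * x - 1) ^ 2`, of `trial r x / (16 * x ^ 2 * (1 - x) ^ 2)`. -/
def trialCoeff : Fin 4 → Fin 5 → ℚ :=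
  ![![1000, -17, 26, 1, 1], ![5, -42, -47, -25, -10], ![1, -19, 21, -7, 103],
    ![1, -16, -150, 970, -1120]]

/-- Weights of the tensor squares `trial r ⊗ trial r` in the Ritz approximation of the first
eigenfunction on the unit square. -/
def trialWeight : Fin 4 → ℚ := ![1, -64, -100, -5]

/-- Powers of `2 * x - 1` occurring in the trial functions, indexed by the pairs of a column of
`trialCoeff` and a term of the expansion of `(1 - (2 * x - 1) ^ 2) ^ 2`. -/
def trialExponent (k : Fin 5 × Fin 3) : ℕ := 2 * (k.1 + k.2)

/-- Coefficients of the trial functions with respect to the powers `trialExponent`. -/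
def trialExpansion (r : Fin 4) (k : Fin 5 × Fin 3) : ℚ := trialCoeff r k.1 * ![1, -2, 1] k.2

/-- The one-dimensional trial functions of the Ritz method. -/
def trial (r : Fin 4) : ℝ → ℝ := centredSum trialExponent fun k => trialExpansion r k

theorem trial_eq_mul (r : Fin 4) (x : ℝ) :
    trial r x = 16 * centredSum (fun k : Fin 5 => 2 * (k : ℕ)) (fun k => trialCoeff r k) x *
      (x ^ 2 * (1 - x) ^ 2) := by
  simp only [trial, centredSum, trialExponent, trialExpansion, Fintype.sum_prod_type,
    Finset.mul_sum, Finset.sum_mul]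
  refine Finset.sum_congr rfl fun k _ => ?_
  simp [Fin.sum_univ_three]
  ring

/-- The Gram matrix of the `j`-th derivatives of the trial functions. -/
def trialGram (j : ℕ) (r s : Fin 4) : ℚ :=
  ∑ k, ∑ l, trialExpansion r k * trialExpansion s l *
    centredMoment j (trialExponent k) (trialExponent l)

theorem gram_trial (j : ℕ) (r s : Fin 4) : gram j (trial r) (trial s) = trialGram j r s := by
  rw [trial, trial, gram_centredSum]
  push_cast [trialGram]
  rfl

/-- The rational number `ritzMass trialWeight trial`. -/
def trialMass : ℚ :=
  ∑ r, ∑ s, trialWeight r * trialWeight s * (trialGram 0 r s * trialGram 0 r s)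

/-- The rational number `ritzEnergy 1 trialWeight trial`. -/
def trialEnergy : ℚ :=
  ∑ r, ∑ s, trialWeight r * trialWeight s * (trialGram 2 r s * trialGram 0 r s
    + 2 * (trialGram 1 r s * trialGram 1 r s) + trialGram 0 r s * trialGram 2 r s)

theorem ritzMass_trial : ritzMass (fun r => (trialWeight r : ℝ)) trial = trialMass := by
  simp only [ritzMass, gram_trial]
  push_cast [trialMass]
  rfl

theorem ritzEnergy_trial : ritzEnergy 1 (fun r => (trialWeight r : ℝ)) trial = trialEnergy := by
  simp only [ritzEnergy, gram_trial, inv_one, one_mul]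
  push_cast [trialEnergy]
  rfl

theorem trialMass_pos : 0 < trialMass := by
  decide +kernel

theorem trialEnergy_lt : trialEnergy < 1294.9346 * trialMass := by
  decide +kernel

theorem lam1_one_lt : lam1 1 < 1294.9346 := by
  have hmass : (0 : ℝ) < trialMass := by exact_mod_cast trialMass_pos
  have henergy : (trialEnergy : ℝ) < 1294.9346 * trialMass := by
    simpa only [Rat.cast_mul, Rat.cast_ofScientific] using
      (Rat.cast_lt (K := ℝ)).2 trialEnergy_lt
  have hritz := lam1_mul_ritzMass_le_ritzEnergy (fun r => (trialWeight r : ℝ)) one_pos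
    (fun r => contDiff_const.mul (contDiff_centredSum _ _)) trial_eq_mul
  rw [one_pow, ritzMass_trial, ritzEnergy_trial] at hritz
  exact lt_of_mul_lt_mul_right (hritz.trans_lt henergy) hmass.le

end TrialFunctions

section Minimisers

theorem mul_energy_le {s t ρ : ℝ} (hs : 0 < s) (ht : 0 < t) (h1 : ρ ≤ 1) (hts : ρ * t ≤ s)
    (hst : ρ * s ≤ t) (v : ℝ × ℝ → ℝ) : ρ * energy t v ≤ energy s v := by
  have hinv : ρ * t⁻¹ ≤ s⁻¹ := by
    rwa [← div_eq_mul_inv, ← one_div, div_le_div_iff₀ ht hs, one_mul]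
  calc ρ * energy t v
      = ρ * t⁻¹ * (∫ p, uxx v p ^ 2) + 2 * (ρ * ∫ p, uxy v p ^ 2)
        + ρ * t * (∫ p, uyy v p ^ 2) := by rw [energy]; ring
    _ ≤ s⁻¹ * (∫ p, uxx v p ^ 2) + 2 * (1 * ∫ p, uxy v p ^ 2) + s * (∫ p, uyy v p ^ 2) := by
        gcongr
    _ = energy s v := by rw [one_mul, energy]

theorem mul_lam1_le {a b ρ : ℝ} (ha : 0 < a) (hb : 0 < b) (h0 : 0 ≤ ρ) (h1 : ρ ≤ 1)
    (hba : ρ * b ^ 4 ≤ a ^ 4) (hab : ρ * a ^ 4 ≤ b ^ 4) : ρ * lam1 b ≤ lam1 a := by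
  refine (le_lam1_iff ha).2 fun v hv => ?_
  calc ρ * lam1 b * (∫ p, v p ^ 2) ≤ ρ * energy (b ^ 4) v := by
        rw [mul_assoc]
        gcongr
        exact (le_lam1_iff hb).1 le_rfl v hv
    _ ≤ energy (a ^ 4) v := mul_energy_le (by positivity) (by positivity) h1 hba hab v

theorem lowerSemicontinuousOn_lam1 : LowerSemicontinuousOn lam1 (Set.Ioi 0) := by
  intro b hb y hy
  rw [Set.mem_Ioi] at hb
  have hb4 : 0 < b ^ 4 := by positivity
  have hcont : ContinuousAt (fun a : ℝ => min 1 (min (a ^ 4 / b ^ 4) (b ^ 4 / a ^ 4)) * lam1 b) b :=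
    by fun_prop (disch := exact hb4.ne')
  have hlim : ∀ᶠ a in nhds b, y < min 1 (min (a ^ 4 / b ^ 4) (b ^ 4 / a ^ 4)) * lam1 b :=
    hcont.eventually (lt_mem_nhds (by simpa [div_self hb4.ne'] using hy))
  filter_upwards [nhdsWithin_le_nhds hlim, self_mem_nhdsWithin] with a hya ha
  rw [Set.mem_Ioi] at ha
  have ha4 : 0 < a ^ 4 := by positivity
  refine hya.trans_le (mul_lam1_le ha hb (by positivity) (min_le_left _ _) ?_ ?_)
  · exact (le_div_iff₀ hb4).mp ((min_le_right _ _).trans (min_le_left _ _))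
  · exact (le_div_iff₀ ha4).mp ((min_le_right _ _).trans (min_le_right _ _))

theorem lam1_one_lt_of_ge {a : ℝ} (ha : 1.032695 ≤ a) : lam1 1 < lam1 a := by
  have ha0 : 0 < a := lt_of_lt_of_le (by norm_num) ha
  exact lam1_one_lt.trans_le ((le_lam1_iff ha0).2 fun v hv => hv.lower_bound_energy (by gcongr))

end Minimisers

/-- There exists a global minimiser `a* ∈ [1, 1.032695)` of the first Dirichlet
biharmonic eigenvalue over rectangles of unit area, and every minimiser has
side-length quotient `(a*)² ≤ 1.066459`. -/
theorem first_eigenvalue_minimiser_exists_and_close_to_square :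
    (∃ astar : ℝ, astar ∈ Set.Ico (1 : ℝ) 1.032695 ∧
      ∀ a : ℝ, 1 ≤ a → lam1 astar ≤ lam1 a) ∧
    (∀ astar : ℝ, 1 ≤ astar → (∀ a : ℝ, 1 ≤ a → lam1 astar ≤ lam1 a) →
      astar ^ 2 ≤ 1.066459) := by
  have hlt : ∀ b, lam1 b ≤ lam1 1 → b < 1.032695 := fun b hb =>
    not_le.mp fun h => (lam1_one_lt_of_ge h).not_ge hb
  refine ⟨?_, fun b hb hmin => ?_⟩
  · have hmem : (1 : ℝ) ∈ Set.Icc (1 : ℝ) 1.032695 := ⟨le_rfl, by norm_num⟩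
    obtain ⟨b, hb, hbmin⟩ := (lowerSemicontinuousOn_lam1.mono fun x hx =>
      zero_lt_one.trans_le hx.1).exists_isMinOn ⟨1, hmem⟩ isCompact_Icc
    have hb1 : lam1 b ≤ lam1 1 := hbmin hmem
    refine ⟨b, ⟨hb.1, hlt b hb1⟩, fun a ha => ?_⟩
    rcases le_total a 1.032695 with h | h
    · exact hbmin ⟨ha, h⟩
    · exact hb1.trans (lam1_one_lt_of_ge h).le
  · have := hlt b (hmin 1 le_rfl)
    nlinarith
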